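/- (Growth of the singular series.) Assume n ≥ 4, gcd(L, 2·det(2M_F)) = 1, F(λ) ≡ 0 mod L and gcd(λ₀,…,λ_n, L) = 1. Then every limit σ_p(W;L,λ) exists, the product 𝔖(W;L,λ) converges, and there are constants c₂ ≥ c₁ > 0 depending only on F (in particular independent of L and λ) such that c₁·L^{−n} ≤ 𝔖(W;L,λ) ≤ c₂·L^{−n}. -/

import Mathlib

open scoped BigOperators
open Finset Filter Topology Matrix

noncomputable section

namespace Quad

/-- The integral quadratic form `x ↦ xᵀ M_F x` where `N = 2·M_F` is an integer
symmetric matrix with even diagonal, so that the value `(xᵀ N x)/2` is an integer. -/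
def Fint {m : ℕ} (N : Matrix (Fin m) (Fin m) ℤ) (x : Fin m → ℤ) : ℤ :=
  (∑ i, ∑ j, N i j * x i * x j) / 2

/-- The corresponding real quadratic form `x ↦ xᵀ M_F x`, `N = 2·M_F`. -/
def FR {m : ℕ} (N : Matrix (Fin m) (Fin m) ℤ) (x : Fin m → ℝ) : ℝ :=
  (∑ i, ∑ j, (N i j : ℝ) * x i * x j) / 2

/-- The real quadratic form attached to a real matrix. -/
def QFR {m : ℕ} (A : Matrix (Fin m) (Fin m) ℝ) (x : Fin m → ℝ) : ℝ :=
  ∑ i, ∑ j, A i j * x i * x j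

/-- The gradient `∇F(x) = 2 M_F x = N x`. -/
def grad {m : ℕ} (N : Matrix (Fin m) (Fin m) ℤ) (x : Fin m → ℤ) : Fin m → ℤ :=
  fun i => ∑ j, N i j * x j

/-- `H_{λ,L}(y) = F(λ)/L + ∇F(λ)·y` (assuming `L ∣ F(λ)`). -/
def Hpoly {m : ℕ} (N : Matrix (Fin m) (Fin m) ℤ) (L : ℕ) (lam y : Fin m → ℤ) : ℤ :=
  Fint N lam / (L : ℤ) + ∑ i, grad N lam i * y i

/-- The additive character `e_q(t) = exp(2πit/q)`. -/
def eChar (q : ℕ) (t : ℝ) : ℂ := Complex.exp (2 * Real.pi * Complex.I * (t : ℂ) / (q : ℂ))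

/-- The dual form value `N_F(c) = cᵀ · adj(N) · c`, `N = 2 M_F`; this equals `2ⁿ F*(c)`. -/
def dualF {m : ℕ} (N : Matrix (Fin m) (Fin m) ℤ) (c : Fin m → ℤ) : ℤ :=
  ∑ i, ∑ j, N.adjugate i j * c i * c j

/-- The embedding sending the `i`-th of the `n-1` variables of `F₂` to coordinate `i+2`. -/
def emb {n : ℕ} (i : Fin (n-1)) : Fin (n+1) := ⟨i.val + 2, by have h := i.isLt; omega⟩

/-- The quadratic Gauss sum `ι_q = Σ_{x mod q} e_q(x²)`. -/
def iotaSum (q : ℕ) : ℂ := ∑ x ∈ Finset.range q, eChar q ((x : ℝ)^2)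

open Classical in
/-- The exponential sum `S_{q,L,λ}(c)`. -/
def Sq (n : ℕ) (N : Matrix (Fin (n+1)) (Fin (n+1)) ℤ) (q L : ℕ)
    (lam c : Fin (n+1) → ℤ) : ℂ :=
  ∑ a ∈ (Finset.range q).filter (fun a => Nat.gcd a q = 1),
    ∑ σ ∈ (Finset.univ : Finset (Fin (n+1) → Fin (q*L))).filter
        (fun σ => (L : ℤ) ∣ Hpoly N L lam (fun i => ((σ i : ℕ) : ℤ))),
      eChar (q*L)
        (((a : ℤ) * (Hpoly N L lam (fun i => ((σ i : ℕ) : ℤ))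
            + (L : ℤ) * Fint N (fun i => ((σ i : ℕ) : ℤ)))
          + ∑ i, c i * ((σ i : ℕ) : ℤ) : ℤ) : ℝ)

/-- The good-modulus factor `S⁽¹⁾_{q,L,λ}(c)` (for `q = q₁q₂`, `gcd(q₁,2LD) = 1`). -/
def S1 (n : ℕ) (N : Matrix (Fin (n+1)) (Fin (n+1)) ℤ) (q₁ q₂ L : ℕ) (k₁ : ℤ)
    (lam c : Fin (n+1) → ℤ) : ℂ :=
  ∑ σ : Fin (n+1) → Fin q₁,
    ∑ a ∈ (Finset.range q₁).filter (fun a => Nat.gcd a q₁ = 1),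
      eChar q₁
        (((a : ℤ) * (((q₂ : ℤ) * (L : ℤ))^2 * Fint N (fun i => ((σ i : ℕ) : ℤ))
              + (q₂ : ℤ) * ((∑ i, grad N lam i * ((σ i : ℕ) : ℤ)) + k₁))
          + ∑ i, c i * ((σ i : ℕ) : ℤ) : ℤ) : ℝ)

open Classical in
/-- The bad-modulus factor `S⁽²⁾_{q,L,λ}(c)`. -/
def S2 (n : ℕ) (N : Matrix (Fin (n+1)) (Fin (n+1)) ℤ) (q₁ q₂ L : ℕ) (k₂ : ℤ)
    (lam c : Fin (n+1) → ℤ) : ℂ :=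
  ∑ σ ∈ (Finset.univ : Finset (Fin (n+1) → Fin (q₂*L))).filter
      (fun σ => (L : ℤ) ∣ Hpoly N L lam (fun i => (q₁ : ℤ) * ((σ i : ℕ) : ℤ))),
    ∑ a ∈ (Finset.range q₂).filter (fun a => Nat.gcd a q₂ = 1),
      eChar (q₂*L)
        (((a : ℤ) * ((q₁ : ℤ)^2 * (L : ℤ) * Fint N (fun i => ((σ i : ℕ) : ℤ))
              + (q₁ : ℤ) * ((∑ i, grad N lam i * ((σ i : ℕ) : ℤ)) + k₂))
          + ∑ i, c i * ((σ i : ℕ) : ℤ) : ℤ) : ℝ)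

/-- The complete quadratic exponential sum `T_q(G,m;c)`. -/
def Tq (n : ℕ) (NG : Matrix (Fin (n+1)) (Fin (n+1)) ℤ) (q : ℕ) (m : ℤ)
    (c : Fin (n+1) → ℤ) : ℂ :=
  ∑ a ∈ (Finset.range q).filter (fun a => Nat.gcd a q = 1),
    ∑ b : Fin (n+1) → Fin q,
      eChar q (((a : ℤ) * (Fint NG (fun i => ((b i : ℕ) : ℤ)) - m)
        + ∑ i, c i * ((b i : ℕ) : ℤ) : ℤ) : ℝ)

/-- The counting function whose normalised limit is the local density
`σ_p(W;L,λ)`: the number of `v ∈ (ℤ/p^kℤ)^{n+1}` with `F(v) ≡ 0 mod p^k` and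
`v ≡ λ mod p^{ord_p L}`. -/
def localCount (n : ℕ) (N : Matrix (Fin (n+1)) (Fin (n+1)) ℤ) (L : ℕ)
    (lam : Fin (n+1) → ℤ) (p k : ℕ) : ℕ :=
  Nat.card {v : Fin (n+1) → Fin (p^k) //
    ((p : ℤ)^k ∣ Fint N (fun i => ((v i : ℕ) : ℤ))) ∧
    ∀ i, (p : ℤ)^(padicValNat p L) ∣ ((v i : ℕ) : ℤ) - lam i}

/-- The coordinates `t(x) = Mx` of an integer vector. -/
def tmap (n : ℕ) (M : Matrix (Fin (n+1)) (Fin (n+1)) ℝ) (x : Fin (n+1) → ℤ) :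
    Fin (n+1) → ℝ :=
  M.mulVec (fun i => (x i : ℝ))

/-- The counting function `N_W((R,ξ),(L,Γ);B)` for the affine cone. -/
def NW (n : ℕ) (N : Matrix (Fin (n+1)) (Fin (n+1)) ℤ)
    (M : Matrix (Fin (n+1)) (Fin (n+1)) ℝ) (a b : Fin (n+1) → ℝ)
    (B R : ℝ) (L : ℕ) (Γ : Fin (n+1) → ℤ) : ℕ :=
  Nat.card {x : Fin (n+1) → ℤ //
    x ≠ 0 ∧ Fint N x = 0 ∧ (∀ i, (L : ℤ) ∣ x i - Γ i) ∧
    tmap n M x 0 ≠ 0 ∧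
    (∀ j : Fin (n+1), 2 ≤ j.val →
      a j ≤ R * (tmap n M x j / tmap n M x 0) ∧ R * (tmap n M x j / tmap n M x 0) ≤ b j) ∧
    (∀ i, |tmap n M x i| ≤ B)}

/-- Twice the counting function `N_V((R,ξ),(L,Λ);B)` for the projective quadric:
the number of primitive integer vectors on the cone, in the real zoom region,
of height at most `B`, congruent mod `L` to a unit multiple of `Γ`. -/
def NV (n : ℕ) (N : Matrix (Fin (n+1)) (Fin (n+1)) ℤ)
    (M : Matrix (Fin (n+1)) (Fin (n+1)) ℝ) (a b : Fin (n+1) → ℝ)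
    (B R : ℝ) (L : ℕ) (Γ : Fin (n+1) → ℤ) : ℕ :=
  Nat.card {x : Fin (n+1) → ℤ //
    Finset.univ.gcd x = 1 ∧ Fint N x = 0 ∧
    tmap n M x 0 ≠ 0 ∧
    (∀ j : Fin (n+1), 2 ≤ j.val →
      a j ≤ R * (tmap n M x j / tmap n M x 0) ∧ R * (tmap n M x j / tmap n M x 0) ≤ b j) ∧
    (∀ i, |tmap n M x i| ≤ B) ∧
    (∃ γ : (ZMod L)ˣ, ∀ i, ((x i : ZMod L)) = (γ : ZMod L) * ((Γ i : ZMod L)))}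

/-- The value of the singular integral `I_R` for `R ≥ R₀`. -/
def IRval (n : ℕ) (M : Matrix (Fin (n+1)) (Fin (n+1)) ℝ) (a b : Fin (n+1) → ℝ)
    (R : ℝ) : ℝ :=
  2 * (∏ j ∈ Finset.univ.filter (fun j : Fin (n+1) => 2 ≤ j.val), (b j - a j))
    / (((n : ℝ) - 1) * |M.det| * R^(n-1))

/-- The error exponent factor `E_τ(B)`. -/
def Etau (n : ℕ) (τ B : ℝ) : ℝ :=
  if 5 ≤ n then B ^ (-(((n : ℝ) - 3) * τ / (5 * (n : ℝ) - 7)))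
  else B ^ (-(2 * τ / 17))

/-- The error factor `E_τ(1;B)` from the upper-bound range `-1 < τ < 1`. -/
def Etau1 (n : ℕ) (τ B : ℝ) : ℝ :=
  if 5 ≤ n then B ^ (-(((n : ℝ) - 3) * τ / 2))
  else B ^ (-τ) + B ^ (-((1 + τ)/4))

end Quad


namespace Quad

lemma even_sum {m : ℕ} {N : Matrix (Fin m) (Fin m) ℤ} (hs : N.IsSymm)
    (he : ∀ i, Even (N i i)) (x : Fin m → ℤ) :
    (2 : ℤ) ∣ ∑ i, ∑ j, N i j * x i * x j := by
  have key : ((∑ i, ∑ j, N i j * x i * x j : ℤ) : ZMod 2) = 0 := by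
    push_cast
    rw [← Finset.sum_product']
    refine Finset.sum_involution (fun a _ => (a.2, a.1)) ?_ ?_ ?_ ?_
    · rintro ⟨i, j⟩ _
      have h : N j i = N i j := hs.apply i j
      simp only [h]
      have : ∀ a : ZMod 2, a + a = 0 := by decide
      rw [mul_right_comm ((N i j : ℤ) : ZMod 2) (x j) (x i)]
      exact this _
    · rintro ⟨i, j⟩ _ h0 heq
      apply h0
      have hij : j = i := congrArg Prod.fst heq
      subst hij
      have : ((N j j : ℤ) : ZMod 2) = 0 := by
        rw [ZMod.intCast_zmod_eq_zero_iff_dvd]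
        exact_mod_cast (he j).two_dvd
      simp [this]
    · intro a _; simp
    · intro a _; simp
  rw [ZMod.intCast_zmod_eq_zero_iff_dvd] at key
  exact_mod_cast key

lemma two_Fint {m : ℕ} {N : Matrix (Fin m) (Fin m) ℤ} (hs : N.IsSymm)
    (he : ∀ i, Even (N i i)) (x : Fin m → ℤ) :
    2 * Fint N x = ∑ i, ∑ j, N i j * x i * x j :=
  Int.mul_ediv_cancel' (even_sum hs he x)

lemma Fint_add {m : ℕ} {N : Matrix (Fin m) (Fin m) ℤ} (hs : N.IsSymm)
    (he : ∀ i, Even (N i i)) (x y : Fin m → ℤ) :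
    Fint N (x + y) = Fint N x + Fint N y + ∑ i, grad N x i * y i := by
  have h : 2 * Fint N (x + y) = 2 * (Fint N x + Fint N y + ∑ i, grad N x i * y i) := by
    rw [mul_add, mul_add, two_Fint hs he, two_Fint hs he, two_Fint hs he]
    have h1 : ∑ i, grad N x i * y i = ∑ i, ∑ j, N i j * x i * y j := by
      rw [Finset.sum_comm]
      refine Finset.sum_congr rfl fun i _ => ?_
      rw [grad, Finset.sum_mul]
      refine Finset.sum_congr rfl fun j _ => ?_
      rw [hs.apply i j]
    have h2 : ∑ i, grad N x i * y i = ∑ i, ∑ j, N i j * y i * x j := by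
      refine Finset.sum_congr rfl fun i _ => ?_
      rw [grad, Finset.sum_mul]
      refine Finset.sum_congr rfl fun j _ => ?_
      ring
    rw [two_mul]
    nth_rewrite 1 [h1]
    rw [h2]
    simp only [← Finset.sum_add_distrib]
    refine Finset.sum_congr rfl fun i _ => Finset.sum_congr rfl fun j _ => ?_
    simp only [Pi.add_apply]
    ring
  linarith

lemma Fint_smul {m : ℕ} {N : Matrix (Fin m) (Fin m) ℤ} (hs : N.IsSymm)
    (he : ∀ i, Even (N i i)) (c : ℤ) (x : Fin m → ℤ) :
    Fint N (c • x) = c ^ 2 * Fint N x := by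
  have h : 2 * Fint N (c • x) = 2 * (c ^ 2 * Fint N x) := by
    rw [mul_left_comm, two_Fint hs he, two_Fint hs he, Finset.mul_sum]
    refine Finset.sum_congr rfl fun i _ => ?_
    rw [Finset.mul_sum]
    refine Finset.sum_congr rfl fun j _ => ?_
    simp only [Pi.smul_apply, smul_eq_mul]
    ring
  linarith

lemma grad_eq_mulVec {m : ℕ} (N : Matrix (Fin m) (Fin m) ℤ) (x : Fin m → ℤ) :
    grad N x = N *ᵥ x := by
  ext i; simp [grad, Matrix.mulVec, dotProduct]

/-- `p`-power version: if `q ∣ grad x` then `q ∣ det N * x`. -/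
lemma dvd_det_mul {m : ℕ} (N : Matrix (Fin m) (Fin m) ℤ) (x : Fin m → ℤ) (q : ℤ)
    (h : ∀ i, q ∣ (N *ᵥ x) i) (i : Fin m) : q ∣ N.det * x i := by
  have h1 : N.adjugate *ᵥ (N *ᵥ x) = N.det • x := by
    rw [Matrix.mulVec_mulVec, Matrix.adjugate_mul, Matrix.smul_mulVec, Matrix.one_mulVec]
  have h2 := congrFun h1 i
  simp only [Pi.smul_apply, smul_eq_mul] at h2
  rw [← h2]
  change q ∣ ∑ j, N.adjugate i j * (N *ᵥ x) j
  exact Finset.dvd_sum fun j _ => Dvd.dvd.mul_left (h j) _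

lemma Fint_add_smul {m : ℕ} {N : Matrix (Fin m) (Fin m) ℤ} (hs : N.IsSymm)
    (he : ∀ i, Even (N i i)) (x y : Fin m → ℤ) (c : ℤ) :
    Fint N (x + c • y) = Fint N x + c ^ 2 * Fint N y + c * ∑ i, grad N x i * y i := by
  rw [Fint_add hs he, Fint_smul hs he, Finset.mul_sum]
  congr 1
  refine Finset.sum_congr rfl fun i _ => ?_
  simp only [Pi.smul_apply, smul_eq_mul]
  ring

lemma Fint_congr {m : ℕ} {N : Matrix (Fin m) (Fin m) ℤ} (hs : N.IsSymm)
    (he : ∀ i, Even (N i i)) (q : ℤ) (x y : Fin m → ℤ) (h : ∀ i, q ∣ y i - x i) :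
    q ∣ Fint N y - Fint N x := by
  choose w hw using h
  have : y = x + q • w := by
    ext i; simp only [Pi.add_apply, Pi.smul_apply, smul_eq_mul, ← hw]; ring
  rw [this, Fint_add_smul hs he]
  refine ⟨q * Fint N w + ∑ i, grad N x i * w i, by ring⟩

lemma grad_congr {m : ℕ} (N : Matrix (Fin m) (Fin m) ℤ) (q : ℤ) (x y : Fin m → ℤ)
    (h : ∀ i, q ∣ y i - x i) (i : Fin m) : q ∣ grad N y i - grad N x i := by
  rw [grad, grad, ← Finset.sum_sub_distrib]
  refine Finset.dvd_sum fun j _ => ?_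
  rw [← mul_sub]
  exact (h j).mul_left _

/-- Hensel lifting from a nonsingular zero mod `p`. -/
lemma hensel_nonsing {m : ℕ} {N : Matrix (Fin m) (Fin m) ℤ} (hs : N.IsSymm)
    (he : ∀ i, Even (N i i)) (p : ℕ) (hp : p.Prime) (v : Fin m → ℤ) (i : Fin m)
    (hv : (p : ℤ) ∣ Fint N v) (hi : ¬ (p : ℤ) ∣ grad N v i) (K : ℕ) :
    ∃ w : Fin m → ℤ, (p : ℤ) ^ (K + 1) ∣ Fint N w ∧ ¬ (p : ℤ) ∣ grad N w i := by
  induction K with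
  | zero => exact ⟨v, by simpa using hv, hi⟩
  | succ K ih =>
    obtain ⟨w, ⟨a, ha⟩, hw⟩ := ih
    have hpp : Prime (p : ℤ) := Nat.prime_iff_prime_int.mp hp
    have hc : IsCoprime (p : ℤ) (grad N w i) := (hpp.coprime_iff_not_dvd).2 hw
    obtain ⟨s, t, hst⟩ := hc
    refine ⟨w + ((p : ℤ) ^ (K + 1)) • Pi.single i (-t * a), ?_, ?_⟩
    · rw [Fint_add_smul hs he, ha]
      have : ∑ j, grad N w j * (Pi.single i (-t * a) : Fin m → ℤ) j = grad N w i * (-t * a) := by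
        rw [Finset.sum_eq_single i] <;> simp +contextual
      rw [this]
      refine ⟨s * a + (p : ℤ) ^ K * Fint N (Pi.single i (-t * a)), ?_⟩
      linear_combination (-(p : ℤ) ^ (K + 1) * a) * hst
    · intro h
      apply hw
      have := grad_congr N p w (w + ((p : ℤ) ^ (K + 1)) • Pi.single i (-t * a))
        (fun j => by
          simp only [Pi.add_apply, Pi.smul_apply, smul_eq_mul, add_sub_cancel_left]
          exact Dvd.dvd.mul_right (dvd_pow_self _ (by omega)) _) i
      exact (dvd_sub_right h).1 this

/-- Ternary Chevalley-Warning. -/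
lemma ternary {m : ℕ} {N : Matrix (Fin m) (Fin m) ℤ} (hs : N.IsSymm)
    (he : ∀ i, Even (N i i)) (p : ℕ) (hp : p.Prime) (e : Fin 3 → Fin m → ℤ) :
    ∃ x : Fin 3 → ℤ, (∃ i, ¬ (p : ℤ) ∣ x i) ∧ (p : ℤ) ∣ Fint N (∑ i, x i • e i) := by
  have : Fact p.Prime := ⟨hp⟩
  let b : Fin 3 → Fin 3 → ℤ := fun i j => ∑ k, grad N (e i) k * e j k
  let f : MvPolynomial (Fin 3) (ZMod p) :=
    MvPolynomial.C ((Fint N (e 0) : ℤ) : ZMod p) * (MvPolynomial.X 0 * MvPolynomial.X 0)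
    + MvPolynomial.C ((Fint N (e 1) : ℤ) : ZMod p) * (MvPolynomial.X 1 * MvPolynomial.X 1)
    + MvPolynomial.C ((Fint N (e 2) : ℤ) : ZMod p) * (MvPolynomial.X 2 * MvPolynomial.X 2)
    + MvPolynomial.C ((b 0 1 : ℤ) : ZMod p) * (MvPolynomial.X 0 * MvPolynomial.X 1)
    + MvPolynomial.C ((b 0 2 : ℤ) : ZMod p) * (MvPolynomial.X 0 * MvPolynomial.X 2)
    + MvPolynomial.C ((b 1 2 : ℤ) : ZMod p) * (MvPolynomial.X 1 * MvPolynomial.X 2)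
  have hmon : ∀ (c : ZMod p) (i j : Fin 3),
      (MvPolynomial.C c * (MvPolynomial.X i * MvPolynomial.X j)).totalDegree ≤ 2 := by
    intro c i j
    refine (MvPolynomial.totalDegree_mul _ _).trans ?_
    rw [MvPolynomial.totalDegree_C, zero_add]
    refine (MvPolynomial.totalDegree_mul _ _).trans ?_
    simp [MvPolynomial.totalDegree_X]
  have hadd : ∀ g h : MvPolynomial (Fin 3) (ZMod p), g.totalDegree ≤ 2 → h.totalDegree ≤ 2 →
      (g + h).totalDegree ≤ 2 := fun g h hg hh =>
    (MvPolynomial.totalDegree_add g h).trans (max_le hg hh)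
  have hdeg : f.totalDegree ≤ 2 := by
    refine hadd _ _ (hadd _ _ (hadd _ _ (hadd _ _ (hadd _ _ ?_ ?_) ?_) ?_) ?_) ?_ <;> apply hmon
  have hF : ∀ x : Fin 3 → ℤ, ((Fint N (∑ i, x i • e i) : ℤ) : ZMod p)
      = MvPolynomial.eval (fun i => ((x i : ℤ) : ZMod p)) f := by
    intro x
    have h1 : Fint N (∑ i, x i • e i) = Fint N (e 0) * (x 0 * x 0) + Fint N (e 1) * (x 1 * x 1)
        + Fint N (e 2) * (x 2 * x 2) + b 0 1 * (x 0 * x 1) + b 0 2 * (x 0 * x 2)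
        + b 1 2 * (x 1 * x 2) := by
      rw [Fin.sum_univ_three, Fint_add_smul hs he, Fint_add_smul hs he, Fint_smul hs he]
      have g1 : ∀ i j : Fin 3, ∑ k, grad N (x i • e i) k * e j k = x i * b i j := by
        intro i j
        simp only [b, Finset.mul_sum, grad_eq_mulVec, Matrix.mulVec_smul, Pi.smul_apply,
          smul_eq_mul, mul_assoc]
      have g2 : ∑ k, grad N (x 0 • e 0 + x 1 • e 1) k * e 2 k = x 0 * b 0 2 + x 1 * b 1 2 := by
        rw [← g1, ← g1, ← Finset.sum_add_distrib]
        refine Finset.sum_congr rfl fun k _ => ?_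
        simp only [grad_eq_mulVec, Matrix.mulVec_add, Pi.add_apply]
        ring
      rw [g1, g2]
      ring
    rw [h1]
    simp only [f, map_add, map_mul, MvPolynomial.eval_C, MvPolynomial.eval_X]
    push_cast
    ring
  have hcw := char_dvd_card_solutions (K := ZMod p) (σ := Fin 3) p (f := f)
    (by simp; omega)
  have h0 : MvPolynomial.eval (0 : Fin 3 → ZMod p) f = 0 := by simp [f]
  have hex : ∃ x : Fin 3 → ZMod p, x ≠ 0 ∧ MvPolynomial.eval x f = 0 := by
    by_contra hne
    push Not at hne
    have : Fintype.card {x : Fin 3 → ZMod p // MvPolynomial.eval x f = 0} = 1 := by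
      rw [Fintype.card_eq_one_iff]
      refine ⟨⟨0, h0⟩, fun y => ?_⟩
      by_contra hy
      exact hne y.1 (fun h => hy (Subtype.ext h)) y.2
    rw [this] at hcw
    exact hp.one_lt.ne' (Nat.dvd_one.1 hcw)
  obtain ⟨x, hx0, hx⟩ := hex
  refine ⟨fun i => ((x i).val : ℤ), ?_, ?_⟩
  · by_contra h
    push Not at h
    apply hx0
    ext i
    have h2 := (ZMod.intCast_zmod_eq_zero_iff_dvd ((x i).val : ℤ) p).2 (h i)
    simpa using h2
  · rw [← ZMod.intCast_zmod_eq_zero_iff_dvd, hF]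
    simpa using hx

end Quad

namespace Quad

lemma extract_primitive {m : ℕ} {N : Matrix (Fin m) (Fin m) ℤ} (hs : N.IsSymm)
    (he : ∀ i, Even (N i i)) (p : ℕ) (hp : p.Prime) (K : ℕ) (C : ℕ) (w : Fin m → ℤ)
    (hw : ¬ ∀ i, (p : ℤ) ^ C ∣ w i) (hF : (p : ℤ) ^ (K + 2 * C) ∣ Fint N w) :
    ∃ v : Fin m → ℤ, (∃ i, ¬ (p : ℤ) ∣ v i) ∧ (p : ℤ) ^ K ∣ Fint N v := by
  induction C generalizing w with
  | zero => exact absurd (fun i => by simp) hw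
  | succ C ih =>
    by_cases h : ∃ i, ¬ (p : ℤ) ∣ w i
    · exact ⟨w, h, (pow_dvd_pow _ (by omega)).trans hF⟩
    · push Not at h
      choose u hu using h
      have hwu : w = (p : ℤ) • u := by ext i; simp [hu i]
      have hp0 : (p : ℤ) ≠ 0 := by exact_mod_cast hp.ne_zero
      apply ih u
      · intro hall
        apply hw
        intro i
        rw [hu i, pow_succ']
        exact mul_dvd_mul_left _ (hall i)
      · rw [hwu, Fint_smul hs he, show K + 2 * (C + 1) = 2 + (K + 2 * C) by ring, pow_add] at hF
        exact (mul_dvd_mul_iff_left (pow_ne_zero _ hp0)).1 hF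

lemma Fint_mulVec {m : ℕ} {N N' : Matrix (Fin m) (Fin m) ℤ} (hs : N.IsSymm)
    (he : ∀ i, Even (N i i)) (hs' : N'.IsSymm) (he' : ∀ i, Even (N' i i))
    (C : Matrix (Fin m) (Fin m) ℤ) (p : ℤ) (h : Cᵀ * N * C = p • N') (v : Fin m → ℤ) :
    Fint N (C *ᵥ v) = p * Fint N' v := by
  have key : ∀ (A : Matrix (Fin m) (Fin m) ℤ) (x : Fin m → ℤ),
      ∑ i, ∑ j, A i j * x i * x j = x ⬝ᵥ (A *ᵥ x) := by
    intro A x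
    simp only [dotProduct, Matrix.mulVec, Finset.mul_sum]
    refine Finset.sum_congr rfl fun i _ => Finset.sum_congr rfl fun j _ => by ring
  have : 2 * Fint N (C *ᵥ v) = 2 * (p * Fint N' v) := by
    rw [mul_left_comm, two_Fint hs he, two_Fint hs' he', key, key]
    have h1 : p * (v ⬝ᵥ (N' *ᵥ v)) = v ⬝ᵥ ((p • N') *ᵥ v) := by
      rw [Matrix.smul_mulVec, dotProduct_smul, smul_eq_mul]
    rw [h1, ← h, ← Matrix.mulVec_mulVec, ← Matrix.mulVec_mulVec, Matrix.mulVec_transpose,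
      dotProduct_comm v, ← Matrix.dotProduct_mulVec, dotProduct_comm]
  linarith

/-- The descent step. -/
lemma descent {m : ℕ} (hm : 5 ≤ m) {N : Matrix (Fin m) (Fin m) ℤ} (hs : N.IsSymm)
    (he : ∀ i, Even (N i i)) (hdet : N.det ≠ 0) (p : ℕ) (hp : p.Prime)
    (hsing : ∀ v, (p : ℤ) ∣ Fint N v → ∀ i, (p : ℤ) ∣ grad N v i) :
    ∃ N' C : Matrix (Fin m) (Fin m) ℤ, N'.IsSymm ∧ (∀ i, Even (N' i i)) ∧ N'.det ≠ 0 ∧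
      C.det ≠ 0 ∧ N'.det.natAbs < N.det.natAbs ∧ Cᵀ * N * C = (p : ℤ) • N' := by
  have hpp : Prime (p : ℤ) := Nat.prime_iff_prime_int.mp hp
  have hp0 : (p : ℤ) ≠ 0 := hpp.ne_zero
  obtain ⟨M, hM⟩ : ∃ M : Submodule ℤ (Fin m → ℤ), ∀ v, v ∈ M ↔ (p : ℤ) ∣ Fint N v := ⟨
    { carrier := {v | (p : ℤ) ∣ Fint N v}
      add_mem' := by
        intro a b ha hb
        simp only [Set.mem_ofPred_eq] at *
        rw [Fint_add hs he]
        exact dvd_add (dvd_add ha hb) (Finset.dvd_sum fun i _ => (hsing a ha i).mul_right _)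
      zero_mem' := by simp [Fint]
      smul_mem' := by
        intro c x hx
        simp only [Set.mem_ofPred_eq] at *
        rw [Fint_smul hs he]
        exact hx.mul_left _ }, fun v => Iff.rfl⟩
  have hpM : ∀ v : Fin m → ℤ, (p : ℤ) • v ∈ M := by
    intro v
    rw [hM, Fint_smul hs he]
    exact Dvd.dvd.mul_right (dvd_pow_self _ two_ne_zero) _
  have hrank : Module.finrank ℤ M = Module.finrank ℤ (Fin m → ℤ) := by
    apply le_antisymm (Submodule.finrank_le M)
    let φ : (Fin m → ℤ) →ₗ[ℤ] M :=
      LinearMap.codRestrict M (LinearMap.lsmul ℤ (Fin m → ℤ) (p : ℤ)) (fun v => by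
        simpa using hpM v)
    apply LinearMap.finrank_le_finrank_of_injective (f := φ)
    intro x y hxy
    have : (p : ℤ) • x = (p : ℤ) • y := congrArg Subtype.val hxy
    exact smul_right_injective _ hp0 this
  obtain ⟨b, a, ab, hab⟩ := Submodule.exists_smith_normal_form_of_rank_eq (Pi.basisFun ℤ (Fin m)) hrank
  have hdiv : ∀ x ∈ M, ∀ i, a i ∣ b.repr x i := by
    intro x hx i
    have h1 : x = ∑ j, (ab.repr ⟨x, hx⟩ j) • (a j • b j) := by
      have := congrArg Subtype.val (ab.sum_repr ⟨x, hx⟩)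
      simp only [Submodule.coe_sum, Submodule.coe_smul, hab] at this
      exact this.symm
    rw [h1]
    simp only [map_sum, map_smul, Module.Basis.repr_self, Finsupp.coe_finsetSum,
      Finset.sum_apply, Finsupp.smul_apply, Finsupp.single_apply, smul_eq_mul]
    rw [Finset.sum_eq_single i]
    · simp
    · intro j _ hj; simp [hj]
    · simp
  have hap : ∀ i, a i ∣ (p : ℤ) := by
    intro i
    have := hdiv _ (hpM (b i)) i
    rw [map_smul, Finsupp.smul_apply, Module.Basis.repr_self, Finsupp.single_eq_same, smul_eq_mul,
      mul_one] at this
    exact this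
  have ha0 : ∀ i, a i ≠ 0 := fun i h => hp0 (by have := hap i; rw [h] at this; exact zero_dvd_iff.1 this)
  classical
  let S : Finset (Fin m) := Finset.univ.filter (fun i => ¬ IsUnit (a i))
  have hS : S.card ≤ 2 := by
    by_contra hcard
    push Not at hcard
    have hemb : Nonempty (Fin 3 ↪ S) := by
      apply Function.Embedding.nonempty_of_card_le
      rw [Fintype.card_fin, Fintype.card_coe]
      exact hcard
    obtain ⟨e⟩ := hemb
    obtain ⟨x, ⟨i, hi⟩, hx⟩ := ternary hs he p hp (fun k => b (e k))
    have h1 := hdiv _ ((hM _).2 hx) (e i)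
    have h2 : b.repr (∑ k, x k • b (e k)) (e i) = x i := by
      simp only [map_sum, map_smul, Module.Basis.repr_self, Finsupp.coe_finsetSum,
        Finset.sum_apply, Finsupp.smul_apply, Finsupp.single_apply, smul_eq_mul]
      rw [Finset.sum_eq_single i]
      · simp
      · intro j _ hj
        have : (e j : Fin m) ≠ e i := fun h => hj (e.injective (Subtype.ext h))
        simp [this]
      · simp
    rw [h2] at h1
    have h3 : ¬ IsUnit (a (e i)) := (Finset.mem_filter.1 (e i).2).2
    have h4 := (hpp.irreducible.dvd_iff.1 (hap (e i))).resolve_left h3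
    exact hi (h4.dvd.trans h1)
  have hprod : (∏ i, a i).natAbs ≤ p ^ 2 := by
    rw [← Int.natAbsHom_apply, map_prod]
    simp only [Int.natAbsHom_apply]
    calc ∏ i, (a i).natAbs ≤ ∏ i, (if i ∈ S then p else 1) := by
          apply Finset.prod_le_prod'
          intro i _
          split_ifs with h
          · exact Nat.le_of_dvd hp.pos (by simpa using Int.natAbs_dvd_natAbs.2 (hap i))
          · have : IsUnit (a i) := by simpa [S] using h
            rw [Int.isUnit_iff_natAbs_eq.1 this]
      _ = p ^ S.card := by
          rw [Finset.prod_ite_mem, Finset.univ_inter, Finset.prod_const]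
      _ ≤ p ^ 2 := Nat.pow_le_pow_right hp.pos hS
  let C : Matrix (Fin m) (Fin m) ℤ := Matrix.of fun i j => a j * b j i
  let U : Matrix (Fin m) (Fin m) ℤ := (Pi.basisFun ℤ (Fin m)).toMatrix b
  have hCU : C = U * Matrix.diagonal a := by
    ext i j
    simp [C, U, Matrix.mul_diagonal, Module.Basis.toMatrix_apply, mul_comm]
  have hU : IsUnit U.det := by
    have h1 : U * b.toMatrix (Pi.basisFun ℤ (Fin m)) = 1 :=
      Module.Basis.toMatrix_mul_toMatrix_flip _ _
    have h2 := congrArg Matrix.det h1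
    rw [Matrix.det_mul, Matrix.det_one] at h2
    exact IsUnit.of_mul_eq_one _ h2
  have hCdet : C.det.natAbs ≤ p ^ 2 := by
    rw [hCU, Matrix.det_mul, Matrix.det_diagonal, Int.natAbs_mul, Int.isUnit_iff_natAbs_eq.1 hU, one_mul]
    exact hprod
  have hC0 : C.det ≠ 0 := by
    rw [hCU, Matrix.det_mul, Matrix.det_diagonal]
    exact mul_ne_zero hU.ne_zero (Finset.prod_ne_zero_iff.2 fun i _ => ha0 i)
  let c : Fin m → Fin m → ℤ := fun j => a j • b j
  have hc : ∀ j, (p : ℤ) ∣ Fint N (c j) := fun j => by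
    have := (ab j).2
    rw [hab] at this
    exact (hM _).1 this
  let G := Cᵀ * N * C
  have hG : ∀ i j, G i j = ∑ k, grad N (c i) k * c j k := by
    intro i j
    simp only [G, Matrix.mul_apply, Matrix.transpose_apply, grad, C, Matrix.of_apply, c,
      Pi.smul_apply, smul_eq_mul]
    refine Finset.sum_congr rfl fun k _ => ?_
    congr 1
    refine Finset.sum_congr rfl fun l _ => ?_
    rw [hs.apply k l]; ring
  have hGs : G.IsSymm := by
    simp only [G, Matrix.IsSymm, Matrix.transpose_mul, Matrix.transpose_transpose, hs.eq,
      Matrix.mul_assoc]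
  have hGp : ∀ i j, (p : ℤ) ∣ G i j := by
    intro i j
    rw [hG]
    have h1 := Fint_add hs he (c i) (c j)
    have h2 : (p : ℤ) ∣ Fint N (c i + c j) :=
      (hM _).1 (M.add_mem ((hM _).2 (hc i)) ((hM _).2 (hc j)))
    rw [h1] at h2
    exact (dvd_add_right (dvd_add (hc i) (hc j))).1 h2
  have hGd : ∀ i, G i i = 2 * Fint N (c i) := by
    intro i
    rw [hG, two_Fint hs he]
    refine Finset.sum_congr rfl fun k _ => ?_
    rw [grad, Finset.sum_mul]
    refine Finset.sum_congr rfl fun l _ => by ring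
  choose N' hN' using hGp
  have hGN : G = (p : ℤ) • (Matrix.of N') := by
    ext i j; simp [hN']
  refine ⟨Matrix.of N', C, ?_, ?_, ?_, hC0, ?_, hGN⟩
  · ext i j
    have h1 : G j i = G i j := hGs.apply i j
    rw [hN', hN'] at h1
    simpa using mul_left_cancel₀ hp0 h1
  · intro i
    obtain ⟨t, ht⟩ := hc i
    have h1 := hGd i
    rw [ht, hN'] at h1
    have h2 : N' i i = 2 * t := mul_left_cancel₀ hp0 (by linarith)
    simp [h2]
  · intro h0
    have h1 := congrArg Matrix.det hGN
    rw [Matrix.det_smul, h0, mul_zero] at h1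
    simp only [G, Matrix.det_mul, Matrix.det_transpose] at h1
    exact mul_ne_zero (mul_ne_zero hC0 hdet) hC0 h1
  · have h1 := congrArg (fun A => (Matrix.det A).natAbs) hGN
    simp only [G, Matrix.det_smul, Matrix.det_mul, Matrix.det_transpose, Int.natAbs_mul,
      Int.natAbs_pow, Int.natAbs_natCast, Fintype.card_fin] at h1
    by_contra hlt
    push Not at hlt
    set D := N.det.natAbs with hD
    have hDpos : 0 < D := Int.natAbs_pos.2 hdet
    have h2 : p ^ m * D ≤ p ^ 4 * D := by
      calc p ^ m * D ≤ p ^ m * (Matrix.of N').det.natAbs := Nat.mul_le_mul_left _ hlt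
        _ = C.det.natAbs * D * C.det.natAbs := h1.symm
        _ ≤ p ^ 2 * D * p ^ 2 := by gcongr
        _ = p ^ 4 * D := by ring
    have h3 : p ^ m ≤ p ^ 4 := Nat.le_of_mul_le_mul_right h2 hDpos
    have h4 : p ^ 4 < p ^ m := Nat.pow_lt_pow_right hp.one_lt (by omega)
    omega

theorem isotropic {m : ℕ} (hm : 5 ≤ m) (p : ℕ) (hp : p.Prime) (D : ℕ) :
    ∀ (N : Matrix (Fin m) (Fin m) ℤ), N.IsSymm → (∀ i, Even (N i i)) → N.det ≠ 0 →
      N.det.natAbs = D → ∀ K : ℕ,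
      ∃ v : Fin m → ℤ, (∃ i, ¬ (p : ℤ) ∣ v i) ∧ (p : ℤ) ^ K ∣ Fint N v := by
  induction D using Nat.strong_induction_on with
  | _ D ih =>
    intro N hs he hdet hD K
    by_cases hsing : ∀ v, (p : ℤ) ∣ Fint N v → ∀ i, (p : ℤ) ∣ grad N v i
    · obtain ⟨N', C, hs', he', hdet', hC0, hlt, hC⟩ := descent hm hs he hdet p hp hsing
      obtain ⟨v, ⟨i, hi⟩, hv⟩ := ih _ (hD ▸ hlt) N' hs' he' hdet' rfl (K + 2 * C.det.natAbs)
      apply extract_primitive hs he p hp K C.det.natAbs (C *ᵥ v)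
      · intro hall
        have h1 := dvd_det_mul C v _ hall i
        have hpp : Prime (p : ℤ) := Nat.prime_iff_prime_int.mp hp
        have hcop : IsCoprime ((p : ℤ) ^ C.det.natAbs) (v i) :=
          IsCoprime.pow_left ((hpp.coprime_iff_not_dvd).2 hi)
        have h2 := hcop.dvd_of_dvd_mul_right h1
        have h3 := Int.natAbs_dvd_natAbs.2 h2
        rw [Int.natAbs_pow, Int.natAbs_natCast] at h3
        have h4 := Nat.le_of_dvd (Int.natAbs_pos.2 hC0) h3
        have h5 := Nat.lt_pow_self hp.one_lt (n := C.det.natAbs)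
        omega
      · rw [Fint_mulVec hs he hs' he' C p hC v]
        exact hv.mul_left _
    · push Not at hsing
      obtain ⟨v, hv, i, hi⟩ := hsing
      obtain ⟨w, hw, hwi⟩ := hensel_nonsing hs he p hp v i hv hi K
      refine ⟨w, ?_, (pow_dvd_pow _ (Nat.le_succ K)).trans hw⟩
      by_contra hall
      push Not at hall
      exact hwi (Finset.dvd_sum fun j _ => (hall j).mul_left _)

end Quad

namespace Quad

/-- Number of residue vectors mod `q` satisfying `P`. -/
def cnt (m q : ℕ) (P : (Fin m → ℤ) → Prop) : ℕ :=
  Nat.card {v : Fin m → Fin q // P (fun i => ((v i : ℕ) : ℤ))}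

/-- `P` is periodic mod `q`. -/
def Per {m : ℕ} (q : ℕ) (P : (Fin m → ℤ) → Prop) : Prop :=
  ∀ x y : Fin m → ℤ, (∀ i, (q : ℤ) ∣ y i - x i) → P x → P y

lemma cnt_congr {m q : ℕ} {P Q : (Fin m → ℤ) → Prop} (h : ∀ v, P v ↔ Q v) :
    cnt m q P = cnt m q Q := by
  have : P = Q := funext fun v => propext (h v)
  rw [this]

lemma cnt_mul {m a b : ℕ} {P : (Fin m → ℤ) → Prop} (hP : Per b P) :
    cnt m (a * b) P = a ^ m * cnt m b P := by
  let e : (Fin m → Fin (a * b)) ≃ (Fin m → Fin a) × (Fin m → Fin b) :=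
    (Equiv.arrowCongr (Equiv.refl _) finProdFinEquiv.symm).trans
      (Equiv.arrowProdEquivProdArrow _ _ _)
  have hval : ∀ v i, ((v i : ℕ) : ℤ) = (((e v).2 i : ℕ) : ℤ) + b * (((e v).1 i : ℕ) : ℤ) := by
    intro v i
    have h := finProdFinEquiv.apply_symm_apply (v i)
    have h2 := congrArg (fun z : Fin (a * b) => ((z : ℕ) : ℤ)) h
    simp only [finProdFinEquiv_apply_val] at h2
    push_cast at h2
    exact h2.symm
  have e2 : {v : Fin m → Fin (a * b) // P (fun i => ((v i : ℕ) : ℤ))} ≃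
      (Fin m → Fin a) × {v : Fin m → Fin b // P (fun i => ((v i : ℕ) : ℤ))} :=
    (e.subtypeEquiv (q := fun w => P (fun i => ((w.2 i : ℕ) : ℤ))) (fun v => by
      constructor
      · intro h
        refine hP _ _ (fun i => ?_) h
        rw [hval v i]
        exact ⟨-(((e v).1 i : ℕ) : ℤ), by ring⟩
      · intro h
        refine hP _ _ (fun i => ?_) h
        rw [hval v i]
        exact ⟨(((e v).1 i : ℕ) : ℤ), by ring⟩)).trans
    { toFun := fun w => (w.1.1, ⟨w.1.2, w.2⟩)
      invFun := fun w => ⟨(w.1, w.2.1), w.2.2⟩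
      left_inv := fun w => rfl
      right_inv := fun w => rfl }
  rw [cnt, Nat.card_congr e2, Nat.card_prod]
  simp [cnt]

lemma cnt_dvd {m a b : ℕ} (hb : 0 < b) (P : (Fin m → ℤ) → Prop) :
    cnt m (a * b) (fun v => (∀ i, (b : ℤ) ∣ v i) ∧ P v) = cnt m a (fun u => P ((b : ℤ) • u)) := by
  refine (Nat.card_congr ?_).symm
  refine Equiv.ofBijective (fun u => ⟨fun i => ⟨(u.1 i : ℕ) * b, ?_⟩, ?_, ?_⟩) ⟨?_, ?_⟩
  · exact (Nat.mul_lt_mul_right hb).2 (u.1 i).2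
  · intro i
    simp
  · have h := u.2
    convert h using 2
    simp [mul_comm]
  · intro u v huv
    apply Subtype.ext
    funext i
    apply Fin.ext
    have h := congrArg (fun z => ((z.1 i : Fin (a * b)) : ℕ)) huv
    exact Nat.eq_of_mul_eq_mul_right hb h
  · rintro ⟨v, hv, hPv⟩
    have hv' : ∀ i, ∃ t : ℕ, (v i : ℕ) = t * b := by
      intro i
      obtain ⟨t, ht⟩ := Int.natCast_dvd_natCast.1 (hv i)
      exact ⟨t, by rw [ht, mul_comm]⟩
    choose t ht using hv'
    refine ⟨⟨fun i => ⟨t i, ?_⟩, ?_⟩, ?_⟩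
    · have := (v i).2
      rw [ht i] at this
      exact lt_of_mul_lt_mul_right this (Nat.zero_le _)
    · convert hPv using 2
      simp [ht, mul_comm]
    · apply Subtype.ext
      funext i
      apply Fin.ext
      simp [ht]

lemma cnt_le {m q : ℕ} (hq : 0 < q) {P Q : (Fin m → ℤ) → Prop} (hQ : Per q Q)
    (φ : (Fin m → ℤ) → (Fin m → ℤ)) (hφ : ∀ v, P v → Q (φ v))
    (hinj : ∀ v w, P v → P w → (∀ i, (q : ℤ) ∣ φ v i - φ w i) → ∀ i, (q : ℤ) ∣ v i - w i) :
    cnt m q P ≤ cnt m q Q := by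
  have hq0 : (q : ℤ) ≠ 0 := by exact_mod_cast hq.ne'
  have hqp : (0 : ℤ) < q := by exact_mod_cast hq
  have hnn : ∀ z : ℤ, ((z % q).toNat : ℤ) = z % q := fun z => Int.toNat_of_nonneg (Int.emod_nonneg _ hq0)
  let f : {v : Fin m → Fin q // P (fun i => ((v i : ℕ) : ℤ))} →
      {v : Fin m → Fin q // Q (fun i => ((v i : ℕ) : ℤ))} := fun v =>
    ⟨fun i => ⟨(φ (fun i => ((v.1 i : ℕ) : ℤ)) i % q).toNat, by
      have h1 := hnn (φ (fun i => ((v.1 i : ℕ) : ℤ)) i)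
      have h2 := Int.emod_lt_of_pos (φ (fun i => ((v.1 i : ℕ) : ℤ)) i) hqp
      omega⟩, by
      refine hQ _ _ (fun i => ?_) (hφ _ v.2)
      simp only [hnn]
      rw [← dvd_neg, neg_sub]
      exact Int.dvd_self_sub_emod⟩
  refine Nat.card_le_card_of_injective f ?_
  intro v w hvw
  apply Subtype.ext
  funext i
  have h := hinj _ _ v.2 w.2 (fun i => by
    have h1 := congrArg (fun z => (((z.1 i : Fin q) : ℕ) : ℤ)) hvw
    simp only [f, hnn] at h1
    exact Int.ModEq.dvd (n := (q : ℤ)) h1.symm) i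
  apply Fin.ext
  have h1 := (v.1 i).2
  have h2 := (w.1 i).2
  have h3 : |((v.1 i : ℕ) : ℤ) - ((w.1 i : ℕ) : ℤ)| < q := by
    rw [abs_lt]; constructor <;> omega
  have h4 := Int.eq_zero_of_abs_lt_dvd h h3
  omega

open Classical in
lemma cnt_eq_card (m q : ℕ) (P : (Fin m → ℤ) → Prop) :
    cnt m q P = (Finset.univ.filter (fun v : Fin m → Fin q => P (fun i => ((v i : ℕ) : ℤ)))).card := by
  rw [cnt, Nat.card_eq_fintype_card, Fintype.card_subtype]

lemma cnt_sum {m q : ℕ} (r : ℕ) {P : (Fin m → ℤ) → Prop} (R : ℕ → (Fin m → ℤ) → Prop)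
    (h1 : ∀ v, P v → ∃ a < r, R a v) (h2 : ∀ a v, R a v → P v)
    (h3 : ∀ a < r, ∀ b < r, ∀ v, R a v → R b v → a = b) :
    cnt m q P = ∑ a ∈ Finset.range r, cnt m q (R a) := by
  classical
  simp only [cnt_eq_card]
  rw [← Finset.card_biUnion]
  · congr 1
    ext v
    simp only [Finset.mem_filter, Finset.mem_univ, true_and, Finset.mem_biUnion, Finset.mem_range]
    constructor
    · intro h; exact h1 _ h
    · rintro ⟨a, _, h⟩; exact h2 _ _ h
  · intro a ha b hb hab
    rw [Function.onFun, Finset.disjoint_left]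
    intro v hv hw
    simp only [Finset.mem_filter, Finset.mem_univ, true_and] at hv hw
    exact hab (h3 a (by simpa using ha) b (by simpa using hb) _ hv hw)

lemma cnt_split {m q : ℕ} (P Q : (Fin m → ℤ) → Prop) :
    cnt m q P = cnt m q (fun v => Q v ∧ P v) + cnt m q (fun v => (¬ Q v) ∧ P v) := by
  classical
  simp only [cnt_eq_card]
  rw [← Finset.card_union_of_disjoint]
  · congr 1
    ext v
    simp only [Finset.mem_filter, Finset.mem_univ, true_and, Finset.mem_union]
    tauto
  · rw [Finset.disjoint_left]
    intro v
    simp only [Finset.mem_filter, Finset.mem_univ, true_and]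
    tauto

/-- The direction exists. -/
lemma exists_dir {m : ℕ} (p d : ℕ) (hp : p.Prime) (g : Fin m → ℤ)
    (h : ∃ i, ¬ (p : ℤ) ^ (d + 1) ∣ g i) :
    ∃ w : Fin m → ℤ, ∑ i, ((g i : ℤ) : ZMod (p ^ (d + 1))) * ((w i : ℤ) : ZMod (p ^ (d + 1)))
      = (p : ZMod (p ^ (d + 1))) ^ d := by
  obtain ⟨i, hi⟩ := h
  have hg : (Int.gcd (g i) ((p : ℤ) ^ (d + 1))) ∣ p ^ (d + 1) := by
    have h1 := Int.gcd_dvd_right (g i) ((p : ℤ) ^ (d + 1))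
    exact_mod_cast h1
  obtain ⟨j, hj, hgj⟩ := (Nat.dvd_prime_pow hp).1 hg
  have hjd : j ≤ d := by
    by_contra hlt
    have : j = d + 1 := by omega
    apply hi
    have h1 := Int.gcd_dvd_left (g i) ((p : ℤ) ^ (d + 1))
    rw [hgj, this] at h1
    exact_mod_cast h1
  have hb := Int.gcd_eq_gcd_ab (g i) ((p : ℤ) ^ (d + 1))
  rw [hgj] at hb
  set A := Int.gcdA (g i) ((p : ℤ) ^ (d + 1))
  set B := Int.gcdB (g i) ((p : ℤ) ^ (d + 1))
  refine ⟨Pi.single i (A * (p : ℤ) ^ (d - j)), ?_⟩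
  rw [Finset.sum_eq_single i]
  · rw [Pi.single_eq_same]
    have hz : ((p : ZMod (p ^ (d + 1))) ^ (d + 1)) = 0 := by
      have := ZMod.natCast_self (p ^ (d + 1))
      push_cast at this
      exact this
    have hb2 := congrArg (fun z : ℤ => (z : ZMod (p ^ (d + 1)))) hb
    push_cast at hb2
    rw [hz, zero_mul, add_zero] at hb2
    push_cast
    rw [← mul_assoc, ← hb2, ← pow_add]
    congr 1
    omega
  · intro b _ hb
    simp [hb]
  · simp

lemma hensel_step {m : ℕ} {N : Matrix (Fin m) (Fin m) ℤ} (hs : N.IsSymm)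
    (he : ∀ i, Even (N i i)) (p d e k : ℕ) (hp : p.Prime) (X : (Fin m → ℤ) → Prop)
    (hX : Per (p ^ e) X) (hek : e + d ≤ k) (hdk : 2 * d + 1 ≤ k)
    (hreg : ∀ v, X v → ∃ i, ¬ (p : ℤ) ^ (d + 1) ∣ grad N v i) :
    p * cnt m (p ^ (k + 1)) (fun v => X v ∧ (p : ℤ) ^ (k + 1) ∣ Fint N v)
      = p ^ m * cnt m (p ^ k) (fun v => X v ∧ (p : ℤ) ^ k ∣ Fint N v) := by
  classical
  have hp0 : (p : ℤ) ≠ 0 := by exact_mod_cast hp.ne_zero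
  have hXper : ∀ k', e ≤ k' → ∀ x y : Fin m → ℤ, (∀ i, (p : ℤ) ^ k' ∣ y i - x i) → X x → X y := by
    intro k' hk' x y hxy
    refine hX x y fun i => ?_
    push_cast
    exact (pow_dvd_pow _ hk').trans (hxy i)
  have hper : ∀ (k' k'' : ℕ) (c : ℤ), e ≤ k' → k'' ≤ k' →
      Per (p ^ k') (fun v => X v ∧ (p : ℤ) ^ k'' ∣ Fint N v - c) := by
    intro k' k'' c hk' hk'' x y hxy hx
    push_cast at hxy
    refine ⟨hXper k' hk' x y hxy hx.1, ?_⟩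
    have h1 := (pow_dvd_pow (p : ℤ) hk'').trans (Fint_congr hs he _ x y hxy)
    have h2 := dvd_add h1 hx.2
    rwa [show Fint N y - Fint N x + (Fint N x - c) = Fint N y - c by ring] at h2
  -- the right side lifts to level `k+1`
  have hR : p ^ m * cnt m (p ^ k) (fun v => X v ∧ (p : ℤ) ^ k ∣ Fint N v)
      = cnt m (p ^ (k + 1)) (fun v => X v ∧ (p : ℤ) ^ k ∣ Fint N v) := by
    have h := hper k k 0 (by omega) le_rfl
    simp only [sub_zero] at h
    rw [pow_succ', cnt_mul h]
  rw [hR]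
  let R : ℕ → (Fin m → ℤ) → Prop := fun a v =>
    X v ∧ (p : ℤ) ^ (k + 1) ∣ Fint N v - (a : ℤ) * (p : ℤ) ^ k
  have hsum : cnt m (p ^ (k + 1)) (fun v => X v ∧ (p : ℤ) ^ k ∣ Fint N v)
      = ∑ a ∈ Finset.range p, cnt m (p ^ (k + 1)) (R a) := by
    apply cnt_sum
    · rintro v ⟨hv, c, hc⟩
      have hpp : (0 : ℤ) < p := by exact_mod_cast hp.pos
      have hnn := Int.toNat_of_nonneg (Int.emod_nonneg c hp0)
      refine ⟨(c % p).toNat, ?_, hv, ?_⟩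
      · have := Int.emod_lt_of_pos c hpp
        omega
      · rw [hnn, hc, pow_succ, mul_comm (c % p), ← mul_sub]
        exact mul_dvd_mul_left _ Int.dvd_self_sub_emod
    · rintro a v ⟨hv, h⟩
      refine ⟨hv, ?_⟩
      have h1 := (pow_dvd_pow (p : ℤ) (Nat.le_succ k)).trans h
      have h2 := dvd_add h1 (Dvd.intro_left (a : ℤ) rfl : (p : ℤ) ^ k ∣ (a : ℤ) * (p : ℤ) ^ k)
      simpa using h2
    · rintro a ha b hb v ⟨_, h1⟩ ⟨_, h2⟩
      have h3 := dvd_sub h2 h1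
      have h4 : (p : ℤ) ^ k * p ∣ (p : ℤ) ^ k * ((a : ℤ) - b) := by
        rw [← pow_succ]
        rwa [show Fint N v - (b : ℤ) * (p : ℤ) ^ k - (Fint N v - (a : ℤ) * (p : ℤ) ^ k) =
          (p : ℤ) ^ k * ((a : ℤ) - b) by ring] at h3
      have h5 := (mul_dvd_mul_iff_left (pow_ne_zero k hp0)).1 h4
      have h6 : |(a : ℤ) - b| < p := by rw [abs_lt]; constructor <;> omega
      have h7 := Int.eq_zero_of_abs_lt_dvd h5 h6
      omega
  let W : (Fin m → ZMod (p ^ (d + 1))) → (Fin m → ℤ) := fun g =>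
    if h : ∃ w : Fin m → ℤ, ∑ i, g i * ((w i : ℤ) : ZMod (p ^ (d + 1)))
      = (p : ZMod (p ^ (d + 1))) ^ d then h.choose else 0
  let γ : (Fin m → ℤ) → (Fin m → ZMod (p ^ (d + 1))) := fun v i => ((grad N v i : ℤ) : ZMod _)
  let φ : (Fin m → ℤ) → (Fin m → ℤ) := fun v => v + ((p : ℤ) ^ (k - d)) • W (γ v)
  have hφd : ∀ v i, (p : ℤ) ^ (k - d) ∣ φ v i - v i := by
    intro v i
    simp [φ]
  have hγ : ∀ x y : Fin m → ℤ, (∀ i, (p : ℤ) ^ (k - d) ∣ y i - x i) → γ x = γ y := by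
    intro x y hxy
    funext i
    have h1 := grad_congr N _ x y hxy i
    have h2 := (pow_dvd_pow (p : ℤ) (show d + 1 ≤ k - d by omega)).trans h1
    rw [ZMod.intCast_eq_intCast_iff_dvd_sub]
    exact_mod_cast h2
  have hstep : ∀ a, cnt m (p ^ (k + 1)) (R a) ≤ cnt m (p ^ (k + 1)) (R (a + 1)) := by
    intro a
    refine cnt_le (pow_pos hp.pos _) (hper (k + 1) (k + 1) _ (by omega) le_rfl) φ ?_ ?_
    · rintro v ⟨hv, hF⟩
      refine ⟨hXper (k - d) (by omega) v _ (hφd v) hv, ?_⟩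
      have hex := exists_dir p d hp (grad N v) (hreg v hv)
      have hW : ∑ i, γ v i * ((W (γ v) i : ℤ) : ZMod (p ^ (d + 1)))
          = (p : ZMod (p ^ (d + 1))) ^ d := by
        have hex' : ∃ w : Fin m → ℤ, ∑ i, γ v i * ((w i : ℤ) : ZMod (p ^ (d + 1)))
          = (p : ZMod (p ^ (d + 1))) ^ d := hex
        simp only [W, dif_pos hex']
        exact hex'.choose_spec
      have hW2 : (p : ℤ) ^ (d + 1) ∣ ∑ i, grad N v i * W (γ v) i - (p : ℤ) ^ d := by
        have h1 : ((∑ i, grad N v i * W (γ v) i - (p : ℤ) ^ d : ℤ) : ZMod (p ^ (d + 1))) = 0 := by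
          push_cast
          rw [sub_eq_zero]
          exact hW
        rw [ZMod.intCast_zmod_eq_zero_iff_dvd] at h1
        exact_mod_cast h1
      obtain ⟨t, ht⟩ := hW2
      have hsumW : ∑ i, grad N v i * W (γ v) i = (p : ℤ) ^ d + (p : ℤ) ^ (d + 1) * t := by linarith
      obtain ⟨s, hs'⟩ := hF
      simp only [φ]
      rw [Fint_add_smul hs he, hsumW]
      have e1 : (p : ℤ) ^ (k - d) * (p : ℤ) ^ d = (p : ℤ) ^ k := by
        rw [← pow_add]; congr 1; omega
      have e2 : ((p : ℤ) ^ (k - d)) ^ 2 = (p : ℤ) ^ (k + 1) * (p : ℤ) ^ (k - 2 * d - 1) := by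
        rw [← pow_mul, ← pow_add]; congr 1; omega
      rw [e2]
      refine ⟨s + (p : ℤ) ^ (k - 2 * d - 1) * Fint N (W (γ v)) + t, ?_⟩
      push_cast
      linear_combination hs' + (1 + p * t) * e1
    · intro v w _ _ hvw i
      push_cast at hvw ⊢
      have h1 : γ v = γ w := by
        apply hγ
        intro j
        have h2 := (pow_dvd_pow (p : ℤ) (show k - d ≤ k + 1 by omega)).trans (hvw j)
        have h3 := dvd_sub (dvd_sub (hφd v j) (hφd w j)) h2
        rwa [show φ v j - v j - (φ w j - w j) - (φ v j - φ w j) = w j - v j by ring] at h3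
      have h4 := hvw i
      simp only [φ, h1, Pi.add_apply] at h4
      convert h4 using 1
      ring
  have hcyc : cnt m (p ^ (k + 1)) (R p) = cnt m (p ^ (k + 1)) (R 0) := by
    apply cnt_congr
    intro v
    simp only [R]
    have : Fint N v - (p : ℤ) * (p : ℤ) ^ k = (Fint N v - ((0 : ℕ) : ℤ) * (p : ℤ) ^ k) - (p : ℤ) ^ (k + 1) := by
      push_cast; ring
    rw [this, dvd_sub_self_right]
  have hmono : Monotone (fun a => cnt m (p ^ (k + 1)) (R a)) := monotone_nat_of_le_succ hstep
  have hall : ∀ a ∈ Finset.range p, cnt m (p ^ (k + 1)) (R a) = cnt m (p ^ (k + 1)) (R 0) := by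
    intro a ha
    have h1 : cnt m (p ^ (k + 1)) (R a) ≤ cnt m (p ^ (k + 1)) (R p) :=
      hmono (Finset.mem_range.1 ha).le
    have h2 : cnt m (p ^ (k + 1)) (R 0) ≤ cnt m (p ^ (k + 1)) (R a) := hmono (Nat.zero_le a)
    omega
  rw [hsum, Finset.sum_congr rfl hall, Finset.sum_const, Finset.card_range, smul_eq_mul]
  congr 1
  apply cnt_congr
  intro v
  simp [R]

end Quad

namespace Quad

/-- The variance computation for the number of zeros mod a good prime. -/
lemma good_count {n : ℕ} {N : Matrix (Fin (n+1)) (Fin (n+1)) ℤ} (hs : N.IsSymm)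
    (he : ∀ i, Even (N i i)) (p : ℕ) (hp : p.Prime) (hdet : ¬ (p : ℤ) ∣ N.det) :
    ((cnt (n+1) p (fun v => (p : ℤ) ∣ Fint N v) : ℝ) - (p : ℝ) ^ n) ^ 2 ≤ (p : ℝ) ^ (n + 1) := by
  classical
  have : Fact p.Prime := ⟨hp⟩
  have : NeZero p := ⟨hp.ne_zero⟩
  have hpR : (0 : ℝ) < p := by exact_mod_cast hp.pos
  let f : (Fin (n+1) → ZMod p) → ZMod p := fun x => ((Fint N (fun i => ((x i).val : ℤ)) : ℤ) : ZMod p)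
  have hf : ∀ v : Fin (n+1) → ℤ, f (fun i => (v i : ZMod p)) = ((Fint N v : ℤ) : ZMod p) := by
    intro v
    simp only [f]
    rw [ZMod.intCast_eq_intCast_iff_dvd_sub]
    apply Fint_congr hs he
    intro i
    rw [← ZMod.intCast_eq_intCast_iff_dvd_sub]
    simp
  let B : (Fin (n+1) → ZMod p) → (Fin (n+1) → ZMod p) → ZMod p := fun x y =>
    ∑ i, (∑ j, (N i j : ZMod p) * x j) * y i
  have hadd : ∀ x y, f (x + y) = f x + f y + B x y := by
    intro x y
    have h1 := hf ((fun i => ((x i).val : ℤ)) + (fun i => ((y i).val : ℤ)))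
    rw [Fint_add hs he] at h1
    have h2 : (fun i => ((((fun i => ((x i).val : ℤ)) + (fun i => ((y i).val : ℤ))) i : ℤ) : ZMod p))
        = x + y := by
      funext i; simp
    rw [h2] at h1
    rw [h1]
    simp only [f, B, grad]
    push_cast
    simp
  have f0 : f 0 = 0 := by
    have := hf 0
    simp only [Fint] at this
    convert this using 1
    · congr 1; funext i; simp
    · simp
  -- the count in terms of `f`
  let r : ZMod p → ℝ := fun a => ((Finset.univ.filter (fun x => f x = a)).card : ℝ)
  have hr0 : (cnt (n+1) p (fun v => (p : ℤ) ∣ Fint N v) : ℝ) = r 0 := by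
    simp only [r]
    congr 1
    rw [cnt, ← Fintype.card_subtype, ← Nat.card_eq_fintype_card]
    let e : Fin p ≃ ZMod p :=
      { toFun := fun a => ((a : ℕ) : ZMod p)
        invFun := fun x => ⟨x.val, ZMod.val_lt x⟩
        left_inv := fun a => Fin.ext (ZMod.val_cast_of_lt a.2)
        right_inv := fun x => ZMod.natCast_zmod_val x }
    refine Nat.card_congr ((Equiv.arrowCongr (Equiv.refl _) e).subtypeEquiv fun v => ?_)
    have h1 := hf (fun i => ((v i : ℕ) : ℤ))
    have h2 : (fun i => ((((v i : ℕ) : ℤ)) : ZMod p)) = (Equiv.arrowCongr (Equiv.refl _) e) v := by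
      funext i; simp [e]
    rw [← h2, h1, ZMod.intCast_zmod_eq_zero_iff_dvd]
  have hVcard : (Fintype.card (Fin (n+1) → ZMod p) : ℝ) = (p : ℝ) ^ (n + 1) := by
    simp [ZMod.card]
  have hsum1 : ∑ a, r a = (p : ℝ) ^ (n + 1) := by
    rw [← hVcard]
    simp only [r]
    rw [← Nat.cast_sum, ← Finset.card_eq_sum_card_fiberwise (fun x _ => Finset.mem_univ _)]
    simp
  have hrind : ∀ a, r a = ∑ x, if f x = a then (1 : ℝ) else 0 := by
    intro a; simp [r]
  have hfib : ∀ u : Fin (n+1) → ZMod p, u ≠ 0 → ∀ c : ZMod p,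
      (∑ x, if B x u = c then (1 : ℝ) else 0) = (p : ℝ) ^ n := by
    intro u hu c
    let g : (Fin (n+1) → ZMod p) →+ ZMod p :=
      { toFun := fun x => B x u
        map_zero' := by simp [B]
        map_add' := by
          intro x y
          simp only [B, Pi.add_apply, mul_add, Finset.sum_add_distrib, add_mul] }
    have hBg : ∀ x, B x u = ∑ j, (∑ i, (N j i : ZMod p) * u i) * x j := by
      intro x
      simp only [B, Finset.sum_mul]
      rw [Finset.sum_comm]
      refine Finset.sum_congr rfl fun j _ => Finset.sum_congr rfl fun i _ => ?_
      rw [hs.apply j i]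
      ring
    have hex : ∃ j, (∑ i, (N j i : ZMod p) * u i) ≠ 0 := by
      by_contra hall
      push Not at hall
      apply hu
      have h1 : (N.map (Int.castRingHom (ZMod p))) *ᵥ u = 0 := by
        funext j
        simpa [Matrix.mulVec, dotProduct] using hall j
      apply Matrix.eq_zero_of_mulVec_eq_zero _ h1
      rw [← RingHom.mapMatrix_apply, ← RingHom.map_det]
      intro h2
      exact hdet ((ZMod.intCast_zmod_eq_zero_iff_dvd _ _).1 h2)
    obtain ⟨j, hj⟩ := hex
    have hsurj : Function.Surjective g := by
      intro c
      refine ⟨Pi.single j ((∑ i, (N j i : ZMod p) * u i)⁻¹ * c), ?_⟩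
      change B _ u = c
      rw [hBg, Finset.sum_eq_single j]
      · rw [Pi.single_eq_same, ← mul_assoc, mul_inv_cancel₀ hj, one_mul]
      · intro b _ hb; simp [hb]
      · simp
    have hall : ∀ c', (Finset.univ.filter (fun x => g x = c')).card
        = (Finset.univ.filter (fun x => g x = c)).card := fun c' =>
      AddMonoidHom.card_fiber_eq_of_mem_range g (hsurj c') (hsurj c)
    have htot : ∑ c' : ZMod p, (Finset.univ.filter (fun x => g x = c')).card
        = Fintype.card (Fin (n+1) → ZMod p) := by
      rw [← Finset.card_eq_sum_card_fiberwise (fun x _ => Finset.mem_univ _)]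
      simp
    rw [Finset.sum_congr rfl (fun c' _ => hall c'), Finset.sum_const, Finset.card_univ,
      ZMod.card, smul_eq_mul] at htot
    have htot2 : (p : ℝ) * ((Finset.univ.filter (fun x => g x = c)).card : ℝ) = (p : ℝ) ^ (n + 1) := by
      rw [← hVcard, ← htot]; push_cast; rfl
    have h3 : (∑ x, if B x u = c then (1 : ℝ) else 0)
        = ((Finset.univ.filter (fun x => g x = c)).card : ℝ) := by
      rw [Finset.sum_boole]; rfl
    rw [h3]
    rw [pow_succ'] at htot2
    exact mul_left_cancel₀ hpR.ne' htot2
  have hsum2 : ∑ a, r a ^ 2 = (p : ℝ) ^ (n + 1) + ((p : ℝ) ^ (n + 1) - 1) * (p : ℝ) ^ n := by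
    have h1 : ∑ a, r a ^ 2 = ∑ x, r (f x) := by
      have : ∀ a, r a ^ 2 = ∑ x, if f x = a then r (f x) else 0 := by
        intro a
        rw [sq]
        nth_rewrite 1 [hrind a]
        rw [Finset.sum_mul]
        refine Finset.sum_congr rfl fun x _ => ?_
        split_ifs with h
        · rw [h, one_mul]
        · rw [zero_mul]
      simp only [this]
      rw [Finset.sum_comm]
      refine Finset.sum_congr rfl fun x _ => ?_
      simp
    have h2 : ∀ x, r (f x) = ∑ u, if B x u = - f u then (1 : ℝ) else 0 := by
      intro x
      rw [hrind, ← Equiv.sum_comp (Equiv.addLeft x)]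
      refine Finset.sum_congr rfl fun u _ => ?_
      have : (f ((Equiv.addLeft x) u) = f x) ↔ (B x u = - f u) := by
        rw [Equiv.coe_addLeft, hadd]
        constructor
        · intro h; linear_combination h
        · intro h; linear_combination h
      simp only [this]
    rw [h1]
    simp only [h2]
    rw [Finset.sum_comm, ← Finset.add_sum_erase _ _ (Finset.mem_univ (0 : Fin (n+1) → ZMod p))]
    congr 1
    · have : ∀ x, B x 0 = - f 0 := by intro x; simp [B, f0]
      simp [this, ZMod.card]
    · rw [Finset.sum_congr rfl (fun u hu => hfib u (Finset.ne_of_mem_erase hu) _), Finset.sum_const,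
        nsmul_eq_mul]
      congr 1
      rw [Finset.card_erase_of_mem (Finset.mem_univ _), Finset.card_univ, Nat.cast_sub
        Fintype.card_pos, hVcard, Nat.cast_one]
  have hvar : ∑ a, (r a - (p : ℝ) ^ n) ^ 2 = (p : ℝ) ^ (n + 1) - (p : ℝ) ^ n := by
    have h1 : ∀ a, (r a - (p : ℝ) ^ n) ^ 2 = r a ^ 2 - 2 * (p : ℝ) ^ n * r a + ((p : ℝ) ^ n) ^ 2 := by
      intro a; ring
    simp only [h1, Finset.sum_add_distrib, Finset.sum_sub_distrib, ← Finset.mul_sum, hsum1, hsum2,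
      Finset.sum_const, Finset.card_univ, ZMod.card, nsmul_eq_mul]
    ring
  rw [hr0]
  have h1 : (r 0 - (p : ℝ) ^ n) ^ 2 ≤ ∑ a, (r a - (p : ℝ) ^ n) ^ 2 :=
    Finset.single_le_sum (f := fun a => (r a - (p : ℝ) ^ n) ^ 2) (fun a _ => sq_nonneg _) (Finset.mem_univ 0)
  have h2 : (0 : ℝ) ≤ (p : ℝ) ^ n := by positivity
  linarith

end Quad

namespace Quad

lemma tendsto_rec (x : ℕ → ℝ) (c ρ : ℝ) (K : ℕ) (h0 : 0 < ρ) (h1 : ρ < 1)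
    (hx : ∀ k, K ≤ k → x (k + 2) = c + ρ * x k) :
    Tendsto x atTop (𝓝 (c / (1 - ρ))) := by
  set l := c / (1 - ρ) with hl
  have hlc : c = l * (1 - ρ) := by
    rw [hl, div_mul_cancel₀]; linarith
  set s := Real.sqrt ρ with hsdef
  have hs0 : 0 < s := Real.sqrt_pos.2 h0
  have hs2 : s ^ 2 = ρ := Real.sq_sqrt h0.le
  have hs1 : s < 1 := by
    by_contra h
    push Not at h
    nlinarith
  set M := |x K - l| + |x (K + 1) - l| / s with hM
  have hb : ∀ j, |x (K + j) - l| ≤ M * s ^ j := by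
    intro j
    induction j using Nat.twoStepInduction with
    | zero =>
      have : 0 ≤ |x (K + 1) - l| / s := by positivity
      simp only [add_zero, pow_zero, mul_one]
      linarith
    | one =>
      have h2 : M * s ^ 1 = |x K - l| * s + |x (K + 1) - l| := by
        rw [hM]; field_simp
      rw [h2]
      have : 0 ≤ |x K - l| * s := by positivity
      linarith
    | more j ih _ =>
      have h2 : x (K + (j + 2)) - l = ρ * (x (K + j) - l) := by
        rw [← add_assoc, hx (K + j) (by omega), hlc]; ring
      rw [h2, abs_mul, abs_of_pos h0, pow_add, hs2]
      nlinarith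
  have hlim : Tendsto (fun j => M * s ^ j) atTop (𝓝 0) := by
    have := (tendsto_pow_atTop_nhds_zero_of_lt_one hs0.le hs1).const_mul M
    simpa using this
  have h2 : Tendsto (fun j => x (K + j) - l) atTop (𝓝 0) :=
    squeeze_zero_norm (fun j => by rw [Real.norm_eq_abs]; exact hb j) hlim
  have h3 : Tendsto (fun j => x (j + K)) atTop (𝓝 l) := by
    have := h2.add_const l
    simp only [sub_add_cancel, zero_add] at this
    simpa only [add_comm] using this
  exact (tendsto_add_atTop_iff_nat K).1 h3

/-- The primitive residue condition. -/
def Prim {m : ℕ} (p : ℕ) (v : Fin m → ℤ) : Prop := ¬ ∀ i, (p : ℤ) ∣ v i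

lemma Prim_per {m : ℕ} (p : ℕ) : Per (m := m) (p ^ 1) (Prim p) := by
  intro x y hxy hx hy
  apply hx
  intro i
  have h := hxy i
  rw [pow_one] at h
  exact (dvd_sub_right (hy i)).1 h

lemma density_aux {n : ℕ} (hn : 4 ≤ n) {N : Matrix (Fin (n+1)) (Fin (n+1)) ℤ} (hs : N.IsSymm)
    (he : ∀ i, Even (N i i)) (hdet : N.det ≠ 0) (p d : ℕ) (hp : p.Prime)
    (hd : ¬ (p : ℤ) ^ (d + 1) ∣ N.det) :
    0 < cnt (n+1) (p ^ (2 * d + 1)) (fun v => Prim p v ∧ (p : ℤ) ^ (2 * d + 1) ∣ Fint N v) ∧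
    Tendsto (fun k => (cnt (n+1) (p ^ k) (fun v => (p : ℤ) ^ k ∣ Fint N v) : ℝ) / (p : ℝ) ^ (n * k))
      atTop (𝓝 (((cnt (n+1) (p ^ (2 * d + 1))
        (fun v => Prim p v ∧ (p : ℤ) ^ (2 * d + 1) ∣ Fint N v) : ℝ) / (p : ℝ) ^ (n * (2 * d + 1)))
          / (1 - ((p : ℝ) ^ (n - 1))⁻¹))) := by
  have hpR : (0 : ℝ) < p := by exact_mod_cast hp.pos
  have hpR1 : (1 : ℝ) < p := by exact_mod_cast hp.one_lt
  have hpp : Prime (p : ℤ) := Nat.prime_iff_prime_int.mp hp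
  have hp0 : (p : ℤ) ≠ 0 := hpp.ne_zero
  set A : ℕ → ℕ := fun k => cnt (n+1) (p ^ k) (fun v => (p : ℤ) ^ k ∣ Fint N v) with hA
  set P : ℕ → ℕ := fun k => cnt (n+1) (p ^ k) (fun v => Prim p v ∧ (p : ℤ) ^ k ∣ Fint N v) with hPdef
  have hreg : ∀ v, Prim p v → ∃ i, ¬ (p : ℤ) ^ (d + 1) ∣ grad N v i := by
    intro v hv
    by_contra hall
    push Not at hall
    apply hv
    intro i
    by_contra hi
    rw [grad_eq_mulVec] at hall
    have h1 := dvd_det_mul N v _ hall i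
    exact hd ((IsCoprime.pow_left ((hpp.coprime_iff_not_dvd).2 hi)).dvd_of_dvd_mul_right h1)
  have hPstep : ∀ k, 2 * d + 1 ≤ k → P (k + 1) = p ^ n * P k := by
    intro k hk
    have h := hensel_step hs he p d 1 k hp (Prim p) (Prim_per p) (by omega) hk hreg
    rw [pow_succ' p n, mul_assoc] at h
    exact Nat.eq_of_mul_eq_mul_left hp.pos h
  set α : ℝ := (P (2 * d + 1) : ℝ) / (p : ℝ) ^ (n * (2 * d + 1)) with hα
  have hPα : ∀ k, 2 * d + 1 ≤ k → (P k : ℝ) / (p : ℝ) ^ (n * k) = α := by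
    intro k hk
    induction k, hk using Nat.le_induction with
    | base => rfl
    | succ k hk ih =>
      rw [hPstep k hk, ← ih, mul_add, mul_one, pow_add]
      push_cast
      field_simp
  have hAstep : ∀ k, A (k + 2) = p ^ (n + 1) * A k + P (k + 2) := by
    intro k
    simp only [hA, hPdef]
    rw [cnt_split _ (fun v => ∀ i, (p : ℤ) ∣ v i)]
    congr 1
    rw [pow_succ p (k + 1), cnt_dvd hp.pos, pow_succ' p k]
    have h1 : ∀ u : Fin (n+1) → ℤ, ((p : ℤ) ^ (k + 2) ∣ Fint N ((p : ℤ) • u)) ↔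
        (p : ℤ) ^ k ∣ Fint N u := by
      intro u
      rw [Fint_smul hs he, add_comm k 2, pow_add]
      exact mul_dvd_mul_iff_left (pow_ne_zero _ hp0)
    rw [cnt_congr h1, cnt_mul]
    intro x y hxy hx
    push_cast at hxy
    exact (dvd_sub_left hx).1 (Fint_congr hs he _ x y hxy)
  constructor
  · obtain ⟨v, ⟨i, hi⟩, hv⟩ := isotropic (m := n + 1) (by omega) p hp _ N hs he hdet rfl (2 * d + 1)
    have hle := cnt_le (m := n + 1) (q := p ^ (2 * d + 1)) (pow_pos hp.pos _)
      (P := fun w => ∀ i, ((p ^ (2 * d + 1) : ℕ) : ℤ) ∣ w i)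
      (Q := fun v => Prim p v ∧ (p : ℤ) ^ (2 * d + 1) ∣ Fint N v)
      (by
        intro x y hxy hx
        push_cast at hxy
        refine ⟨Prim_per p x y (fun i => ?_) hx.1, ?_⟩
        · push_cast
          exact (pow_dvd_pow _ (by omega)).trans (hxy i)
        · exact (dvd_sub_left hx.2).1 (Fint_congr hs he _ x y hxy))
      (fun _ => v) (fun _ _ => ⟨fun h => hi (h i), hv⟩)
      (fun x y hx hy _ i => dvd_sub (hx i) (hy i))
    have h1 : 0 < cnt (n+1) (p ^ (2 * d + 1)) (fun w => ∀ i, ((p ^ (2 * d + 1) : ℕ) : ℤ) ∣ w i) := by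
      have h2 : 0 < p ^ (2 * d + 1) := pow_pos hp.pos _
      rw [cnt, Nat.card_pos_iff]
      exact ⟨⟨⟨fun _ => ⟨0, h2⟩, fun i => by simp⟩⟩, inferInstance⟩
    omega
  · apply tendsto_rec _ _ _ (2 * d + 1)
    · positivity
    · apply inv_lt_one_of_one_lt₀
      exact one_lt_pow₀ hpR1 (by omega)
    · intro k hk
      have h1 := hPα (k + 2) (by omega)
      have h2 := hAstep k
      change (A (k + 2) : ℝ) / (p : ℝ) ^ (n * (k + 2)) = α + ((p : ℝ) ^ (n - 1))⁻¹ * ((A k : ℝ) / (p : ℝ) ^ (n * k))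
      rw [← h1, h2]
      push_cast
      have h3 : (p : ℝ) ^ (n * (k + 2)) = (p : ℝ) ^ (n + 1) * (p : ℝ) ^ (n - 1) * (p : ℝ) ^ (n * k) := by
        rw [← pow_add, ← pow_add]; congr 1
        have : n + 1 + (n - 1) = 2 * n := by omega
        rw [this]; ring
      rw [add_div, add_comm]
      congr 1
      rw [h3]
      field_simp

lemma local_density {n : ℕ} (hn : 4 ≤ n) {N : Matrix (Fin (n+1)) (Fin (n+1)) ℤ} (hs : N.IsSymm)
    (he : ∀ i, Even (N i i)) (hdet : N.det ≠ 0) (p : ℕ) (hp : p.Prime) :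
    ∃ τ : ℝ, 0 < τ ∧
    Tendsto (fun k => (cnt (n+1) (p ^ k) (fun v => (p : ℤ) ^ k ∣ Fint N v) : ℝ) / (p : ℝ) ^ (n * k))
      atTop (𝓝 τ) ∧ (¬ (p : ℤ) ∣ N.det → |τ - 1| ≤ 6 * (p : ℝ) ^ (-(3/2) : ℝ)) := by
  have hpR : (0 : ℝ) < p := by exact_mod_cast hp.pos
  have hpR1 : (1 : ℝ) < p := by exact_mod_cast hp.one_lt
  have hpR2 : (2 : ℝ) ≤ p := by exact_mod_cast hp.two_le
  have hρ1 : ((p : ℝ) ^ (n - 1))⁻¹ < 1 := inv_lt_one_of_one_lt₀ (one_lt_pow₀ hpR1 (by omega))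
  by_cases hgood : (p : ℤ) ∣ N.det
  · obtain ⟨d, hd⟩ : ∃ d : ℕ, ¬ (p : ℤ) ^ (d + 1) ∣ N.det := by
      refine ⟨N.det.natAbs, fun h => ?_⟩
      have h3 := Int.natAbs_dvd_natAbs.2 h
      rw [Int.natAbs_pow, Int.natAbs_natCast] at h3
      have h4 := Nat.le_of_dvd (Int.natAbs_pos.2 hdet) h3
      have h5 := Nat.lt_pow_self hp.one_lt (n := N.det.natAbs + 1)
      omega
    obtain ⟨h1, h2⟩ := density_aux hn hs he hdet p d hp hd
    refine ⟨_, ?_, h2, fun h => absurd hgood h⟩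
    have h3 : (0 : ℝ) < (cnt (n+1) (p ^ (2 * d + 1))
      (fun v => Prim p v ∧ (p : ℤ) ^ (2 * d + 1) ∣ Fint N v) : ℝ) := by exact_mod_cast h1
    have : 0 < 1 - ((p : ℝ) ^ (n - 1))⁻¹ := by linarith
    positivity
  · obtain ⟨h1, h2⟩ := density_aux hn hs he hdet p 0 hp (by simpa using hgood)
    refine ⟨_, ?_, h2, fun _ => ?_⟩
    · have h3 : (0 : ℝ) < (cnt (n+1) (p ^ (2 * 0 + 1))
        (fun v => Prim p v ∧ (p : ℤ) ^ (2 * 0 + 1) ∣ Fint N v) : ℝ) := by exact_mod_cast h1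
      have : 0 < 1 - ((p : ℝ) ^ (n - 1))⁻¹ := by linarith
      positivity
    · simp only [mul_zero, zero_add, pow_one, mul_one]
      have hcount : cnt (n+1) p (fun v => (p : ℤ) ∣ Fint N v)
          = 1 + cnt (n+1) p (fun v => Prim p v ∧ (p : ℤ) ∣ Fint N v) := by
        rw [cnt_split _ (fun v => ∀ i, (p : ℤ) ∣ v i)]
        congr 1
        have h3 := cnt_dvd (m := n + 1) (a := 1) hp.pos (fun v => (p : ℤ) ∣ Fint N v)
        rw [one_mul] at h3
        rw [h3, cnt]
        have h4 : ∀ v : Fin (n+1) → ℤ, (p : ℤ) ∣ Fint N ((p : ℤ) • v) := by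
          intro v
          rw [Fint_smul hs he]
          exact Dvd.dvd.mul_right (dvd_pow_self _ two_ne_zero) _
        rw [Nat.card_eq_one_iff_unique]
        exact ⟨⟨fun a b => Subtype.ext (Subsingleton.elim _ _)⟩, ⟨⟨fun _ => 0, h4 _⟩⟩⟩
      have hvar := good_count hs he p hp hgood
      rw [hcount] at hvar
      set c : ℝ := (cnt (n+1) p (fun v => Prim p v ∧ (p : ℤ) ∣ Fint N v) : ℝ) with hc
      push_cast at hvar
      rw [← hc] at hvar
      set t : ℝ := (p : ℝ) ^ (-(3/2) : ℝ) with ht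
      have ht0 : 0 < t := Real.rpow_pos_of_pos hpR _
      have ht2 : t ^ 2 = ((p : ℝ) ^ 3)⁻¹ := by
        rw [ht, ← Real.rpow_natCast, ← Real.rpow_mul hpR.le, ← Real.rpow_natCast,
          ← Real.rpow_neg hpR.le]
        norm_num
      have hp3 : ((p : ℝ) ^ 3)⁻¹ ≤ 1 / 8 := by
        rw [inv_le_comm₀ (by positivity) (by norm_num)]
        have : (2 : ℝ) ^ 3 ≤ (p : ℝ) ^ 3 := by gcongr
        norm_num at this ⊢
        linarith
      have ht1 : t ≤ 1 := by
        by_contra h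
        push Not at h
        nlinarith
      set ρ : ℝ := ((p : ℝ) ^ (n - 1))⁻¹ with hρ
      have hρ0 : 0 < ρ := by positivity
      have hρt : ρ ≤ t ^ 2 := by
        rw [ht2, hρ]
        exact inv_anti₀ (by positivity) (pow_le_pow_right₀ hpR1.le (by omega))
      set π : ℝ := ((p : ℝ) ^ n)⁻¹ with hπ
      have hπ0 : 0 < π := by positivity
      have hπt : π ≤ t ^ 2 := by
        rw [ht2, hπ]
        exact inv_anti₀ (by positivity) (pow_le_pow_right₀ hpR1.le (by omega))
      have hy : ((1 + c) * π - 1) ^ 2 ≤ t ^ 2 := by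
        have e1 : (1 + c) * π - 1 = (1 + c - (p : ℝ) ^ n) * π := by
          rw [hπ]; field_simp
        rw [e1, mul_pow]
        have e2 : (p : ℝ) ^ (n + 1) * π ^ 2 = ρ := by
          have e3 : (p : ℝ) ^ n = (p : ℝ) ^ (n - 1) * p := by
            rw [← pow_succ]; congr 1; omega
          rw [hπ, hρ, pow_succ, e3]
          field_simp
        calc (1 + c - (p : ℝ) ^ n) ^ 2 * π ^ 2 ≤ (p : ℝ) ^ (n + 1) * π ^ 2 := by gcongr
          _ = ρ := e2
          _ ≤ t ^ 2 := hρt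
      have hy' : |(1 + c) * π - 1| ≤ t := abs_le_of_sq_le_sq hy ht0.le
      have htt : t ^ 2 ≤ t := by nlinarith
      have h1ρ : 1 / 2 ≤ 1 - ρ := by linarith
      have e5 : c / (p : ℝ) ^ n / (1 - ρ) - 1 = ((1 + c) * π - 1 - π + ρ) / (1 - ρ) := by
        have : 1 - ρ ≠ 0 := by linarith
        rw [div_eq_mul_inv c, ← hπ]
        field_simp
        ring
      rw [e5, abs_div, abs_of_pos (by linarith : (0 : ℝ) < 1 - ρ), div_le_iff₀ (by linarith)]
      rw [abs_le] at hy' ⊢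
      constructor <;> nlinarith

end Quad

namespace Quad

lemma ramified_density {n : ℕ} {N : Matrix (Fin (n+1)) (Fin (n+1)) ℤ} (hs : N.IsSymm)
    (he : ∀ i, Even (N i i)) (L : ℕ) (hL : 0 < L) (hcop : Int.gcd (L : ℤ) (2 * N.det) = 1)
    (lam : Fin (n+1) → ℤ) (hlam : (L : ℤ) ∣ Fint N lam)
    (hprim : Int.gcd (Finset.univ.gcd lam) (L : ℤ) = 1) (p : ℕ) (hp : p.Prime) (hpL : p ∣ L) :
    Tendsto (fun k : ℕ => (localCount n N L lam p k : ℝ) / (p : ℝ)^(n*k)) atTop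
      (𝓝 ((((p : ℝ) ^ (padicValNat p L)) ^ n)⁻¹)) := by
  have : Fact p.Prime := ⟨hp⟩
  have hpR : (0 : ℝ) < p := by exact_mod_cast hp.pos
  have hpp : Prime (p : ℤ) := Nat.prime_iff_prime_int.mp hp
  set e := padicValNat p L with hedef
  have he1 : 1 ≤ e := one_le_padicValNat_of_dvd hL.ne' hpL
  have heL : (p : ℤ) ^ e ∣ (L : ℤ) := by exact_mod_cast pow_padicValNat_dvd
  have hpLZ : (p : ℤ) ∣ (L : ℤ) := by exact_mod_cast hpL
  have hdet : ¬ (p : ℤ) ∣ N.det := by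
    intro h
    have h1 := Int.dvd_coe_gcd hpLZ (h.mul_left 2)
    rw [hcop] at h1
    exact hpp.not_dvd_one (by simpa using h1)
  have hlamp : ¬ ∀ i, (p : ℤ) ∣ lam i := by
    intro h
    have h0 : (p : ℤ) ∣ Finset.univ.gcd lam := Finset.dvd_gcd fun i _ => h i
    have h1 := Int.dvd_coe_gcd h0 hpLZ
    rw [hprim] at h1
    exact hpp.not_dvd_one (by simpa using h1)
  let X : (Fin (n+1) → ℤ) → Prop := fun v => ∀ i, (p : ℤ) ^ e ∣ v i - lam i
  have hX : Per (p ^ e) X := by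
    intro x y hxy hx i
    have h1 := hxy i
    push_cast at h1
    have h2 := dvd_add h1 (hx i)
    rwa [sub_add_sub_cancel] at h2
  have hreg : ∀ v, X v → ∃ i, ¬ (p : ℤ) ^ (0 + 1) ∣ grad N v i := by
    intro v hv
    by_contra hall
    push Not at hall
    apply hlamp
    intro i
    simp only [zero_add, pow_one] at hall
    rw [grad_eq_mulVec] at hall
    have h1 := dvd_det_mul N v _ hall i
    have h2 := (hpp.dvd_or_dvd h1).resolve_left hdet
    have h3 := (dvd_pow_self (p : ℤ) (by omega : e ≠ 0)).trans (hv i)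
    exact (dvd_sub_right h2).1 h3
  let P : ℕ → ℕ := fun k => cnt (n+1) (p ^ k) (fun v => X v ∧ (p : ℤ) ^ k ∣ Fint N v)
  have hstep : ∀ k, e ≤ k → P (k + 1) = p ^ n * P k := by
    intro k hk
    have h := hensel_step hs he p 0 e k hp X hX (by omega) (by omega) hreg
    rw [pow_succ' p n, mul_assoc] at h
    exact Nat.eq_of_mul_eq_mul_left hp.pos h
  have hone : cnt (n+1) (p ^ e) (fun v => (∀ i, ((p ^ e : ℕ) : ℤ) ∣ v i) ∧ True) = 1 := by
    have h3 := cnt_dvd (m := n + 1) (a := 1) (pow_pos hp.pos e) (fun _ => True)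
    rw [one_mul] at h3
    rw [h3, cnt, Nat.card_eq_one_iff_unique]
    exact ⟨⟨fun a b => Subtype.ext (Subsingleton.elim _ _)⟩, ⟨⟨fun _ => 0, trivial⟩⟩⟩
  have hbase : P e = 1 := by
    apply le_antisymm
    · rw [← hone]
      refine cnt_le (pow_pos hp.pos e) ?_ (fun v => v - lam) ?_ ?_
      · intro x y hxy hx
        refine ⟨fun i => ?_, trivial⟩
        exact (dvd_sub_left (hx.1 i)).1 (hxy i)
      · rintro v ⟨hv, _⟩
        refine ⟨fun i => ?_, trivial⟩
        push_cast
        exact hv i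
      · intro v w _ _ h i
        have h1 := h i
        simp only [Pi.sub_apply, sub_sub_sub_cancel_right] at h1
        exact h1
    · rw [← hone]
      refine cnt_le (pow_pos hp.pos e) ?_ (fun _ => lam) ?_ ?_
      · intro x y hxy hx
        refine ⟨hX x y hxy hx.1, ?_⟩
        push_cast at hxy
        exact (dvd_sub_left hx.2).1 (Fint_congr hs he _ x y hxy)
      · intro v _
        exact ⟨fun i => by simp, heL.trans hlam⟩
      · intro v w hv hw _ i
        exact dvd_sub (hv.1 i) (hw.1 i)
  have hval : ∀ k, e ≤ k → (P k : ℝ) / (p : ℝ) ^ (n * k) = (((p : ℝ) ^ e) ^ n)⁻¹ := by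
    intro k hk
    induction k, hk using Nat.le_induction with
    | base => rw [hbase, Nat.cast_one, one_div, mul_comm n e, pow_mul]
    | succ k hk ih =>
      rw [hstep k hk, ← ih, mul_add, mul_one, pow_add]
      push_cast
      field_simp
  have hPl : ∀ k, localCount n N L lam p k = P k := by
    intro k
    apply cnt_congr (Q := fun v => X v ∧ (p : ℤ) ^ k ∣ Fint N v)
      (P := fun v => ((p : ℤ) ^ k ∣ Fint N v) ∧ ∀ i, (p : ℤ) ^ e ∣ v i - lam i)
    intro v
    exact and_comm
  refine tendsto_const_nhds.congr' ?_
  filter_upwards [eventually_ge_atTop e] with k hk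
  rw [hPl, hval k hk]

lemma summable_log_density {τ : {p : ℕ // p.Prime} → ℝ} (D : ℤ) (hD : D ≠ 0)
    (hgood : ∀ p : {p : ℕ // p.Prime}, ¬ ((p.1 : ℕ) : ℤ) ∣ D →
      |τ p - 1| ≤ 6 * ((p.1 : ℕ) : ℝ) ^ (-(3/2) : ℝ)) :
    Summable (fun p => Real.log (τ p)) := by
  have h1 : Summable (fun p : {p : ℕ // p.Prime} => 6 * ((p.1 : ℕ) : ℝ) ^ (-(3/2) : ℝ)) := by
    apply Summable.mul_left
    have h2 : Summable (fun k : ℕ => (k : ℝ) ^ (-(3/2) : ℝ)) := Real.summable_nat_rpow.2 (by norm_num)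
    exact h2.comp_injective Subtype.val_injective
  have h2 : Summable (fun p => τ p - 1) := by
    refine Summable.of_norm_bounded_eventually h1 ?_
    have hfin : {p : {p : ℕ // p.Prime} | ((p.1 : ℕ) : ℤ) ∣ D}.Finite := by
      refine Set.Finite.of_finite_image (f := Subtype.val) ?_ Subtype.val_injective.injOn
      refine (Finset.finite_toSet (Finset.range (D.natAbs + 1))).subset ?_
      rintro _ ⟨p, hp, rfl⟩
      simp only [Finset.coe_range, Set.mem_Iio]
      have := Nat.le_of_dvd (Int.natAbs_pos.2 hD) (Int.natCast_dvd.1 hp)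
      omega
    filter_upwards [hfin.compl_mem_cofinite] with p hp
    exact hgood p hp
  have h3 := Real.summable_log_one_add_of_summable h2
  simpa using h3

/-- Proposition 6.3 (growth of the singular series): `𝔖(W;L,λ) ≍ L⁻ⁿ`,
uniformly in `L` and `λ`. -/
theorem singular_series_growth (n : ℕ) (hn : 4 ≤ n)
    (N : Matrix (Fin (n+1)) (Fin (n+1)) ℤ) (hNsym : N.IsSymm)
    (hNeven : ∀ i, Even (N i i)) (hNdet : N.det ≠ 0) :
    ∃ c₁ c₂ : ℝ, 0 < c₁ ∧ c₁ ≤ c₂ ∧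
      ∀ (L : ℕ), 0 < L → Int.gcd (L : ℤ) (2 * N.det) = 1 →
      ∀ lam : Fin (n+1) → ℤ, (L : ℤ) ∣ Fint N lam →
        Int.gcd (Finset.univ.gcd lam) (L : ℤ) = 1 →
        ∃ σp : ℕ → ℝ,
          (∀ p : ℕ, p.Prime →
            Filter.Tendsto
              (fun k : ℕ => (localCount n N L lam p k : ℝ) / (p : ℝ)^(n*k))
              Filter.atTop (nhds (σp p))) ∧
          ∃ S : ℝ, HasProd (fun p : {p : ℕ // p.Prime} => σp p.1) S ∧
            c₁ * ((L : ℝ)^n)⁻¹ ≤ S ∧ S ≤ c₂ * ((L : ℝ)^n)⁻¹ := by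
  classical
  have hloc : ∀ p : ℕ, ∃ τ : ℝ, p.Prime → (0 < τ ∧
    Tendsto (fun k => (cnt (n+1) (p ^ k) (fun v => (p : ℤ) ^ k ∣ Fint N v) : ℝ) / (p : ℝ) ^ (n * k))
      atTop (𝓝 τ) ∧ (¬ (p : ℤ) ∣ N.det → |τ - 1| ≤ 6 * (p : ℝ) ^ (-(3/2) : ℝ))) := by
    intro p
    by_cases hp : p.Prime
    · obtain ⟨τ, h⟩ := local_density hn hNsym hNeven hNdet p hp
      exact ⟨τ, fun _ => h⟩
    · exact ⟨0, fun h => absurd h hp⟩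
  choose τ hτ using hloc
  have hsumm : Summable (fun p : {p : ℕ // p.Prime} => Real.log (τ p.1)) :=
    summable_log_density N.det hNdet fun p h => (hτ p.1 p.2).2.2 h
  have hsabs := hsumm.abs
  set T := ∑' p : {p : ℕ // p.Prime}, |Real.log (τ p.1)| with hT
  have hT0 : 0 ≤ T := tsum_nonneg fun p => abs_nonneg _
  refine ⟨Real.exp (-T), Real.exp T, Real.exp_pos _, Real.exp_le_exp.2 (by linarith), ?_⟩
  intro L hL hcop lam hlam hprim
  refine ⟨fun p => (if p ∣ L then 1 else τ p) *
    (if p ∣ L then (((p : ℝ) ^ (padicValNat p L)) ^ n)⁻¹ else 1), ?_, ?_⟩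
  · intro p hp
    by_cases hpL : p ∣ L
    · simp only [if_pos hpL, one_mul]
      exact ramified_density hNsym hNeven L hL hcop lam hlam hprim p hp hpL
    · simp only [if_neg hpL, mul_one]
      have h1 := (hτ p hp).2.1
      refine h1.congr fun k => ?_
      congr 2
      have h0 : padicValNat p L = 0 := padicValNat.eq_zero_of_not_dvd hpL
      apply cnt_congr (P := fun v => (p : ℤ) ^ k ∣ Fint N v)
        (Q := fun v => ((p : ℤ) ^ k ∣ Fint N v) ∧ ∀ i, (p : ℤ) ^ (padicValNat p L) ∣ v i - lam i)
      intro v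
      simp [h0]
  · have hlogf : ∀ p : {p : ℕ // p.Prime}, |Real.log (if p.1 ∣ L then 1 else τ p.1)|
        ≤ |Real.log (τ p.1)| := by
      intro p
      split_ifs
      · simp
      · exact le_rfl
    have hsf : Summable (fun p : {p : ℕ // p.Prime} => Real.log (if p.1 ∣ L then 1 else τ p.1)) :=
      Summable.of_norm_bounded hsabs fun p => by rw [Real.norm_eq_abs]; exact hlogf p
    have hpos : ∀ p : {p : ℕ // p.Prime}, 0 < (if p.1 ∣ L then 1 else τ p.1) := by
      intro p
      split_ifs
      · exact one_pos
      · exact (hτ p.1 p.2).1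
    have hp1 := Real.hasProd_of_hasSum_log hpos hsf.hasSum
    set U := ∑' p : {p : ℕ // p.Prime}, Real.log (if p.1 ∣ L then 1 else τ p.1) with hU
    have hUT : |U| ≤ T := by
      have h1 : |U| ≤ ∑' p : {p : ℕ // p.Prime}, |Real.log (if p.1 ∣ L then 1 else τ p.1)| := by
        have := norm_tsum_le_tsum_norm hsf.norm
        simpa only [Real.norm_eq_abs] using this
      exact h1.trans (hsf.abs.tsum_le_tsum hlogf hsabs)
    have hp2 : HasProd (fun p : {p : ℕ // p.Prime} =>
        (if p.1 ∣ L then (((p.1 : ℝ) ^ (padicValNat p.1 L)) ^ n)⁻¹ else 1)) ((L : ℝ) ^ n)⁻¹ := by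
      have h1 := hasProd_prod_of_ne_finset_one (L := SummationFilter.unconditional _)
        (f := fun p : {p : ℕ // p.Prime} =>
        (if p.1 ∣ L then (((p.1 : ℝ) ^ (padicValNat p.1 L)) ^ n)⁻¹ else 1))
        (s := L.primeFactors.subtype Nat.Prime) (by
          intro p hp
          rw [if_neg]
          intro h
          apply hp
          rw [Finset.mem_subtype]
          exact Nat.mem_primeFactors.2 ⟨p.2, h, hL.ne'⟩)
      have h2 : ∏ p ∈ L.primeFactors.subtype Nat.Prime,
          (if p.1 ∣ L then (((p.1 : ℝ) ^ (padicValNat p.1 L)) ^ n)⁻¹ else 1) = ((L : ℝ) ^ n)⁻¹ := by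
        rw [Finset.prod_subtype_of_mem (fun p : ℕ =>
          (if p ∣ L then (((p : ℝ) ^ (padicValNat p L)) ^ n)⁻¹ else 1))
          (fun p hp => Nat.prime_of_mem_primeFactors hp)]
        have h3 : ∀ p ∈ L.primeFactors, (if p ∣ L then (((p : ℝ) ^ (padicValNat p L)) ^ n)⁻¹ else 1)
            = (((p : ℝ) ^ (L.factorization p)) ^ n)⁻¹ := by
          intro p hp
          rw [if_pos (Nat.dvd_of_mem_primeFactors hp),
            Nat.factorization_def _ (Nat.prime_of_mem_primeFactors hp)]
        rw [Finset.prod_congr rfl h3, Finset.prod_inv_distrib, Finset.prod_pow]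
        congr 2
        have h4 := Nat.prod_factorization_pow_eq_self hL.ne'
        rw [Finsupp.prod, Nat.support_factorization] at h4
        exact_mod_cast h4
      rw [h2] at h1
      exact h1
    refine ⟨Real.exp U * ((L : ℝ) ^ n)⁻¹, hp1.mul hp2, ?_, ?_⟩
    · have := abs_le.1 hUT
      gcongr
      linarith
    · have := abs_le.1 hUT
      gcongr
      linarith

end Quad
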